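/- arXiv:1305.1347 — 9 statements merged into one kernel-verified Lean document; each statement's English description precedes it below -/
import Mathlib

section
/- Under the propagation rounding, for every tree node a ∈ X and every set S ⊆ V_a, the random output set A satisfies Pr[A ∩ S = T] = x(S,T) for every T ⊆ S. -/
attribute [local instance] Classical.propDecidable

open Finset

namespace Stmt2

/-- `Anc parent a b` says that `a` is an ancestor of `b` (or `b` itself) in the rooted
tree determined by the `parent` function. -/
def Anc {X : Type*} (parent : X → X) (a b : X) : Prop :=
  Relation.ReflTransGen (fun p c => parent c = p) a b

/-- The probability that the propagation rounding produces a given joint outcome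
`f : X → Finset V` (assigning to every tree node `a` the sampled set `A_a ⊆ V_a`):
the product over the tree nodes of the transition probabilities
`x(V_r, A_r)` at the root and `x(V_a, A_a)/x(V_b, A_b)` at a node `a` with parent `b`. -/
noncomputable def outcomeProb {V X : Type*} [Fintype X]
    (parent : X → X) (root : X) (Vp : X → Finset V)
    (x : Finset V → Finset V → ℝ) (f : X → Finset V) : ℝ :=
  ∏ b : X, (if b = root then x (Vp root) (f root)
            else x (Vp b) (f b) / x (Vp (parent b)) (f (parent b)))

/-- An outcome `f` is consistent with the propagation rounding process:  each sampled
set satisfies `A_a ⊆ V_a`, and agrees with its parent's sample on `V_b`. -/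
def Consistent {V X : Type*} [DecidableEq V]
    (parent : X → X) (root : X) (Vp : X → Finset V) (f : X → Finset V) : Prop :=
  (∀ b, f b ⊆ Vp b) ∧ (∀ b, b ≠ root → f b ∩ Vp (parent b) = f (parent b))

/-!
Let `A_c` be the set sampled at the node `c`. The rounding is a Markov chain indexed by the rooted
tree, and by Sherali-Adams consistency `x(V_b, ·)` is the marginal on `V_b` of `x(V_c, ·)` when `b`
is the parent of `c`. Growing the tree one child at a time, the chain therefore has law `x(V_c, ·)`
at every node `c`: summing over the state of the new node either leaves the law of the old ones
unchanged, or, at the new node itself, multiplies a conditional by a marginal probability.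

Two samples which both decide a vertex `v` agree about it, since both restrict to the sample at a
common ancestor which already decides `v`. Hence `A ∩ V_a = A_a`, and the law of `A ∩ S` for
`S ⊆ V_a` is the marginal on `S` of `x(V_a, ·)`, namely `x(S, ·)`.
-/

lemma filter_univ_eq_filter_of_imp_mem {ι : Type*} [Fintype ι] {s : Finset ι} {p : ι → Prop}
    [DecidablePred p] (hp : ∀ i, p i → i ∈ s) : ({i | p i} : Finset ι) = {i ∈ s | p i} := by
  ext i
  simpa using hp i

section Tree

variable {X : Type*} {parent : X → X} {root : X}

lemma anc_root_of_depth {depth : X → ℕ} (hdepth : ∀ a, a ≠ root → depth (parent a) < depth a)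
    (a : X) : Anc parent root a := by
  induction hn : depth a using Nat.strong_induction_on generalizing a with
  | _ n ih =>
    by_cases ha : a = root
    · exact ha ▸ Relation.ReflTransGen.refl
    · exact (ih _ (hn ▸ hdepth a ha) _ rfl).tail rfl

lemma le_of_anc {β : Type*} [Preorder β] {F : X → β} (hmono : ∀ a, F (parent a) ≤ F a) {a b : X}
    (h : Anc parent a b) : F a ≤ F b := by
  induction h with
  | refl => exact le_rfl
  | tail _ hparent ih => exact ih.trans (hparent ▸ hmono _)

theorem subtree_induction [Fintype X] [DecidableEq X] (hroot : parent root = root)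
    (hreach : ∀ a, Anc parent root a) {motive : Finset X → Prop} (singleton : motive {root})
    (insert_child : ∀ D b, (∀ c ∈ D, parent c ∈ D) → b ∉ D → parent b ∈ D → motive D →
      motive (insert b D)) :
    motive univ := by
  obtain ⟨D, ⟨hrootD, hclosed, hmotive⟩, hmax⟩ :=
    (Set.toFinite {D : Finset X | root ∈ D ∧ (∀ c ∈ D, parent c ∈ D) ∧ motive D}).exists_maximal
      ⟨{root}, by simp [hroot, singleton]⟩
  have hchild : ∀ b, parent b ∈ D → b ∈ D := by
    intro b hb
    by_contra hbD
    have hinsert : ∀ c ∈ insert b D, parent c ∈ insert b D := by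
      intro c hc
      rcases mem_insert.mp hc with rfl | hcD
      · exact mem_insert_of_mem hb
      · exact mem_insert_of_mem (hclosed c hcD)
    exact hbD (hmax ⟨mem_insert_of_mem hrootD, hinsert, insert_child D b hclosed hbD hb hmotive⟩
      (subset_insert b D) (mem_insert_self b D))
  have hall : ∀ a, a ∈ D := by
    intro a
    induction hreach a with
    | refl => exact hrootD
    | tail _ hparent ih => exact hchild _ (hparent ▸ ih)
  rwa [← eq_univ_iff_forall.mpr hall]

end Tree

section TreeChain

variable {X α K : Type*} [CommSemiring K]

section AssignmentsOn

variable [Fintype X] [DecidableEq X] [Inhabited α]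

/-- The assignments of a state in `s c` to every node `c ∈ D`. They are encoded as functions on all
nodes, with the placeholder value `default` off `D`. -/
def assignmentsOn (s : X → Finset α) (D : Finset X) : Finset (X → α) :=
  Fintype.piFinset fun c => if c ∈ D then s c else {default}

lemma assignmentsOn_univ (s : X → Finset α) :
    assignmentsOn s univ = Fintype.piFinset s := by
  simp [assignmentsOn]

lemma assignmentsOn_empty (s : X → Finset α) :
    assignmentsOn s ∅ = {fun _ => default} := by
  simp [assignmentsOn, Fintype.piFinset_singleton]

lemma sum_assignmentsOn_insert (s : X → Finset α) {D : Finset X} {b : X}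
    (hb : b ∉ D) (F : (X → α) → K) :
    ∑ f ∈ assignmentsOn s (insert b D), F f =
      ∑ f ∈ assignmentsOn s D, ∑ C ∈ s b, F (Function.update f b C) := by
  rw [← sum_product']
  refine sum_bij' (fun f _ => (Function.update f b default, f b))
    (fun p _ => Function.update p.1 b p.2) ?_ ?_ ?_ ?_ ?_
  · intro f hf
    simp only [assignmentsOn, Fintype.mem_piFinset, mem_product] at hf ⊢
    refine ⟨fun c => ?_, by simpa using hf b⟩
    obtain rfl | hc := eq_or_ne c b
    · simp [hb]
    · simpa [hc] using hf c
  · rintro ⟨f, C⟩ hp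
    simp only [assignmentsOn, Fintype.mem_piFinset, mem_product] at hp ⊢
    intro c
    obtain rfl | hc := eq_or_ne c b
    · simpa using hp.2
    · simpa [hc] using hp.1 c
  · simp
  · rintro ⟨f, C⟩ hp
    have hfb : f b = default := by
      simpa [hb] using Fintype.mem_piFinset.mp (mem_product.mp hp).1 b
    simp [← hfb]
  · simp

end AssignmentsOn

/-- `w` gives the transition weights (node, state of the parent, state of the node) of a Markov
chain indexed by a rooted tree, with state spaces `s` and one-node marginals `μ`. At the root the
state of the parent is irrelevant, and the transitions out of null states need not be normalized. -/
structure IsTreeChain (parent : X → X) (root : X) (s : X → Finset α) (w : X → α → α → K)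
    (μ : X → α → K) : Prop where
  root_eq : ∀ P C, w root P C = μ root C
  eq_zero_of_null : ∀ c P C, μ c C = 0 → w c P C = 0
  sum_eq_one : ∀ c ≠ root, ∀ P ∈ s (parent c), μ (parent c) P ≠ 0 → ∑ C ∈ s c, w c P C = 1
  sum_mul_eq : ∀ c ≠ root, ∀ C ∈ s c, ∑ P ∈ s (parent c), μ (parent c) P * w c P C = μ c C

lemma prod_update_insert [DecidableEq X] (parent : X → X) (w : X → α → α → K) {D : Finset X} {b : X}
    (hclosed : ∀ c ∈ D, parent c ∈ D) (hb : b ∉ D) (hparent : parent b ∈ D) (f : X → α) (C : α) :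
    ∏ c ∈ insert b D, w c (Function.update f b C (parent c)) (Function.update f b C c) =
      (∏ c ∈ D, w c (f (parent c)) (f c)) * w b (f (parent b)) C := by
  have hne : ∀ c ∈ D, c ≠ b := fun c hc => ne_of_mem_of_not_mem hc hb
  rw [prod_insert hb, mul_comm, Function.update_self, Function.update_of_ne (hne _ hparent)]
  congr 1
  refine prod_congr rfl fun c hc => ?_
  rw [Function.update_of_ne (hne c hc), Function.update_of_ne (hne _ (hclosed c hc))]

namespace IsTreeChain

variable {parent : X → X} {root : X} {s : X → Finset α} {w : X → α → α → K} {μ : X → α → K}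

lemma prod_mul_sum_eq_prod [Fintype X] [DecidableEq X] [Inhabited α]
    (h : IsTreeChain parent root s w μ) {D : Finset X} {b : X} (hb : b ≠ root)
    (hparent : parent b ∈ D) {f : X → α} (hf : f ∈ assignmentsOn s D) :
    (∏ c ∈ D, w c (f (parent c)) (f c)) * ∑ C ∈ s b, w b (f (parent b)) C =
      ∏ c ∈ D, w c (f (parent c)) (f c) := by
  by_cases hnull : μ (parent b) (f (parent b)) = 0
  · rw [prod_eq_zero hparent (h.eq_zero_of_null _ _ _ hnull), zero_mul]
  · have hmem : f (parent b) ∈ s (parent b) := by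
      simpa [hparent] using Fintype.mem_piFinset.mp hf (parent b)
    rw [h.sum_eq_one b hb _ hmem hnull, mul_one]

lemma sum_sum_mul_eq (h : IsTreeChain parent root s w μ) {b : X} (hb : b ≠ root) (g : α → K) :
    ∑ P ∈ s (parent b), μ (parent b) P * ∑ C ∈ s b, w b P C * g C = ∑ C ∈ s b, μ b C * g C := by
  simp_rw [mul_sum, ← mul_assoc]
  rw [sum_comm]
  exact sum_congr rfl fun C hC => by rw [← sum_mul, h.sum_mul_eq b hb C hC]

theorem sum_piFinset_prod_mul [Fintype X] [DecidableEq X] [Inhabited α]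
    (h : IsTreeChain parent root s w μ) (hroot : parent root = root)
    (hreach : ∀ a, Anc parent root a) (a : X) (g : α → K) :
    ∑ f ∈ Fintype.piFinset s, (∏ c, w c (f (parent c)) (f c)) * g (f a) =
      ∑ C ∈ s a, μ a C * g C := by
  suffices hsub : ∀ a ∈ (univ : Finset X), ∀ g : α → K,
      ∑ f ∈ assignmentsOn s univ, (∏ c, w c (f (parent c)) (f c)) * g (f a) =
        ∑ C ∈ s a, μ a C * g C by
    simpa only [assignmentsOn_univ] using hsub a (mem_univ a) g
  refine subtree_induction (motive := fun D => ∀ a ∈ D, ∀ g : α → K,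
    ∑ f ∈ assignmentsOn s D, (∏ c ∈ D, w c (f (parent c)) (f c)) * g (f a) =
      ∑ C ∈ s a, μ a C * g C) hroot hreach ?_ ?_
  · intro a ha g
    obtain rfl := mem_singleton.mp ha
    rw [← insert_empty_eq, sum_assignmentsOn_insert s (notMem_empty a), assignmentsOn_empty]
    simp [h.root_eq]
  · intro D b hclosed hbD hparent ih a ha g
    have hb : b ≠ root := fun hb => hbD (by rwa [hb, hroot, ← hb] at hparent)
    rw [sum_assignmentsOn_insert s hbD]
    simp_rw [prod_update_insert parent w hclosed hbD hparent]
    rcases mem_insert.mp ha with rfl | haD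
    · simp_rw [Function.update_self, mul_assoc, ← mul_sum]
      rw [ih (parent a) hparent fun P => ∑ C ∈ s a, w a P C * g C, h.sum_sum_mul_eq hb]
    · simp_rw [Function.update_of_ne (ne_of_mem_of_not_mem haD hbD), ← sum_mul, ← mul_sum]
      rw [← ih a haD g]
      exact sum_congr rfl fun f hf => by rw [h.prod_mul_sum_eq_prod hb hparent hf]

end IsTreeChain

end TreeChain

section SheraliAdams

variable {V M : Type*} [DecidableEq V]

/-- The Sherali-Adams consistency constraints for `x` among the subsets of `W`: there, `x S` is the
marginal on `S` of `x (insert u S)`. -/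
def SheraliAdamsOn [Add M] (x : Finset V → Finset V → M) (W : Finset V) : Prop :=
  ∀ (S T : Finset V) (u : V), insert u S ⊆ W → T ⊆ S → u ∉ S →
    x S T = x (insert u S) T + x (insert u S) (insert u T)

namespace SheraliAdamsOn

variable {S T W C : Finset V}

theorem sum_powerset_filter [AddCommMonoid M] {x : Finset V → Finset V → M}
    (h : SheraliAdamsOn x W) (hS : S ⊆ W) (hT : T ⊆ S) :
    ∑ C ∈ W.powerset with C ∩ S = T, x W C = x S T := by
  suffices hunion : ∀ R, Disjoint R S → R ∪ S ⊆ W →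
      ∑ C ∈ (R ∪ S).powerset with C ∩ S = T, x (R ∪ S) C = x S T by
    simpa only [sdiff_union_of_subset hS] using
      hunion (W \ S) sdiff_disjoint (sdiff_union_of_subset hS).subset
  intro R
  induction R using Finset.induction_on with
  | empty =>
    intro _ _
    have hfilter : {C ∈ S.powerset | C ∩ S = T} = {T} := by
      ext C
      simp only [mem_filter, mem_powerset, mem_singleton]
      constructor
      · rintro ⟨hC, rfl⟩
        exact (inter_eq_left.mpr hC).symm
      · rintro rfl
        exact ⟨hT, inter_eq_left.mpr hT⟩
    rw [empty_union, hfilter, sum_singleton]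
  | insert u R hu ih =>
    intro hdisj hsub
    obtain ⟨huS, hRS⟩ := disjoint_insert_left.mp hdisj
    rw [insert_union] at hsub ⊢
    have huRS : u ∉ R ∪ S := by simp [hu, huS]
    rw [← ih hRS ((subset_insert u _).trans hsub), sum_filter, sum_filter,
      sum_powerset_insert huRS, ← sum_add_distrib]
    refine sum_congr rfl fun C hC => ?_
    rw [insert_inter_of_notMem huS, h _ C u hsub (mem_powerset.mp hC) huRS]
    split_ifs <;> simp

lemma eq_zero_of_inter_eq_zero [AddCommMonoid M] [PartialOrder M] [IsOrderedAddMonoid M]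
    {x : Finset V → Finset V → M} (h : SheraliAdamsOn x W) (hnonneg : ∀ C ⊆ W, 0 ≤ x W C)
    (hS : S ⊆ W) (hC : C ⊆ W) (hzero : x S (C ∩ S) = 0) : x W C = 0 := by
  rw [← h.sum_powerset_filter hS inter_subset_right, sum_eq_zero_iff_of_nonneg] at hzero
  · exact hzero C (by simp [hC])
  · exact fun B hB => hnonneg B (mem_powerset.mp (mem_filter.mp hB).1)

end SheraliAdamsOn

end SheraliAdams

section Consistent

variable {V X : Type*} [DecidableEq V] {parent : X → X} {root : X} {Vp f : X → Finset V}

lemma Consistent.inter_eq_of_anc (hroot : parent root = root) (hmono : ∀ a, Vp (parent a) ⊆ Vp a)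
    (hf : Consistent parent root Vp f) {c a : X} (h : Anc parent c a) : f a ∩ Vp c = f c := by
  induction h with
  | refl => exact inter_eq_left.mpr (hf.1 c)
  | @tail p q hcp hpq ih =>
    have hparent : f q ∩ Vp p = f p := by
      obtain rfl | hq := eq_or_ne q root
      · rw [← hpq, hroot]
        exact inter_eq_left.mpr (hf.1 q)
      · exact hpq ▸ hf.2 q hq
    rw [← ih, ← hparent, inter_assoc, inter_eq_right.mpr (le_of_anc hmono hcp)]

lemma Consistent.biUnion_inter [Fintype X] (hroot : parent root = root)
    (hmono : ∀ a, Vp (parent a) ⊆ Vp a)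
    (hcommon : ∀ a b v, v ∈ Vp a → v ∈ Vp b → ∃ c, Anc parent c a ∧ Anc parent c b ∧ v ∈ Vp c)
    (hf : Consistent parent root Vp f) (a : X) : univ.biUnion f ∩ Vp a = f a := by
  refine Subset.antisymm (fun v hv => ?_)
    (subset_inter (subset_biUnion_of_mem f (mem_univ a)) (hf.1 a))
  obtain ⟨hv, hva⟩ := mem_inter.mp hv
  obtain ⟨b, -, hvb⟩ := mem_biUnion.mp hv
  obtain ⟨c, hca, hcb, hvc⟩ := hcommon a b v hva (hf.1 b hvb)
  have hvfc : v ∈ f c := by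
    rw [← hf.inter_eq_of_anc hroot hmono hcb]
    exact mem_inter.mpr ⟨hvb, hvc⟩
  rw [← hf.inter_eq_of_anc hroot hmono hca] at hvfc
  exact (mem_inter.mp hvfc).1

end Consistent

section Propagation

variable {V X : Type*} [DecidableEq V] {parent : X → X} {root : X} {Vp : X → Finset V}
  {x : Finset V → Finset V → ℝ}

/-- The probability with which the propagation rounding samples `C ⊆ V_c` at the node `c`, given
the sample `P` at the parent of `c`; at the root `P` is ignored. -/
noncomputable def transition (parent : X → X) (root : X) (Vp : X → Finset V)
    (x : Finset V → Finset V → ℝ) (c : X) (P C : Finset V) : ℝ :=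
  if c ≠ root → C ∩ Vp (parent c) = P then
    if c = root then x (Vp c) C else x (Vp c) C / x (Vp (parent c)) P
  else 0

lemma isTreeChain_transition (hmono : ∀ a, Vp (parent a) ⊆ Vp a)
    (hx0 : ∀ a, ∀ C ⊆ Vp a, 0 ≤ x (Vp a) C) (hxc : ∀ a, SheraliAdamsOn x (Vp a)) :
    IsTreeChain parent root (fun c => (Vp c).powerset) (transition parent root Vp x)
      (fun c C => x (Vp c) C) where
  root_eq P C := by simp [transition]
  eq_zero_of_null c P C hC := by simp [transition, hC]
  sum_eq_one c hc P hP hne := by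
    simp only [transition, hc, ne_eq, not_false_eq_true, true_imp_iff, if_false]
    rw [← sum_filter, ← sum_div, (hxc c).sum_powerset_filter (hmono c) (mem_powerset.mp hP),
      div_self hne]
  sum_mul_eq c hc C hC := by
    have hmem : C ∩ Vp (parent c) ∈ (Vp (parent c)).powerset :=
      mem_powerset.mpr inter_subset_right
    simp only [transition, hc, ne_eq, not_false_eq_true, true_imp_iff, if_false, mul_ite, mul_zero]
    rw [sum_ite_eq, if_pos hmem]
    -- A null sample at the parent has only null extensions, so the junk value `0 / 0` is harmless.
    exact mul_div_cancel_of_imp' fun hzero =>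
      (hxc c).eq_zero_of_inter_eq_zero (hx0 c) (hmono c) (mem_powerset.mp hC) hzero

variable [Fintype X]

lemma prod_transition {f : X → Finset V} (hf : ∀ c, f c ⊆ Vp c) :
    ∏ c, transition parent root Vp x c (f (parent c)) (f c) =
      if Consistent parent root Vp f then outcomeProb parent root Vp x f else 0 := by
  have houtcome : ∏ c, (if c = root then x (Vp c) (f c)
      else x (Vp c) (f c) / x (Vp (parent c)) (f (parent c))) =
        outcomeProb parent root Vp x f :=
    prod_congr rfl fun c _ => by split_ifs with hc <;> simp [hc]
  simp only [transition, prod_ite_zero, houtcome, Consistent, mem_univ, true_imp_iff, hf,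
    implies_true, true_and]

theorem stmt_2_general [DecidableEq X] (hroot : parent root = root)
    (hreach : ∀ a, Anc parent root a) (hmono : ∀ a, Vp (parent a) ⊆ Vp a)
    (hcommon : ∀ a b v, v ∈ Vp a → v ∈ Vp b → ∃ c, Anc parent c a ∧ Anc parent c b ∧ v ∈ Vp c)
    (hx0 : ∀ a, ∀ C ⊆ Vp a, 0 ≤ x (Vp a) C) (hxc : ∀ a, SheraliAdamsOn x (Vp a))
    (a : X) {S T : Finset V} (hS : S ⊆ Vp a) (hT : T ⊆ S) :
    ∑ f ∈ Fintype.piFinset fun c => (Vp c).powerset with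
        Consistent parent root Vp f ∧ univ.biUnion f ∩ S = T,
      outcomeProb parent root Vp x f = x S T := by
  have hinter : ∀ f, Consistent parent root Vp f → univ.biUnion f ∩ S = f a ∩ S := by
    intro f hf
    rw [← hf.biUnion_inter hroot hmono hcommon a, inter_assoc, inter_eq_right.mpr hS]
  calc
    _ = ∑ f ∈ Fintype.piFinset fun c => (Vp c).powerset,
          (∏ c, transition parent root Vp x c (f (parent c)) (f c)) *
            if f a ∩ S = T then 1 else 0 := by
      rw [sum_filter]
      refine sum_congr rfl fun f hf => ?_
      rw [prod_transition fun c => mem_powerset.mp (Fintype.mem_piFinset.mp hf c)]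
      by_cases hcons : Consistent parent root Vp f <;> simp [hcons, hinter]
    _ = ∑ C ∈ (Vp a).powerset, x (Vp a) C * if C ∩ S = T then 1 else 0 :=
      (isTreeChain_transition hmono hx0 hxc).sum_piFinset_prod_mul hroot hreach a
        fun C => if C ∩ S = T then 1 else 0
    _ = x S T := by
      simp_rw [mul_ite, mul_one, mul_zero]
      rw [← sum_filter, (hxc a).sum_powerset_filter hS hT]

end Propagation

section TreeDecomposition

variable {V X : Type*} [DecidableEq V] {parent : X → X} {root : X} {U Vp : X → Finset V}

lemma parent_subset_of_eq_union (hroot : parent root = root)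
    (hVp : ∀ a, a ≠ root → Vp a = U a ∪ Vp (parent a)) (a : X) : Vp (parent a) ⊆ Vp a := by
  obtain rfl | ha := eq_or_ne a root
  · rw [hroot]
  · exact hVp a ha ▸ subset_union_right

lemma bag_subset (hVroot : Vp root = U root)
    (hVp : ∀ a, a ≠ root → Vp a = U a ∪ Vp (parent a)) (a : X) : U a ⊆ Vp a := by
  obtain rfl | ha := eq_or_ne a root
  · exact hVroot.superset
  · exact hVp a ha ▸ subset_union_left

lemma exists_anc_mem_bag (hreach : ∀ a, Anc parent root a) (hVroot : Vp root = U root)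
    (hVp : ∀ a, a ≠ root → Vp a = U a ∪ Vp (parent a)) {a : X} {v : V} (hv : v ∈ Vp a) :
    ∃ b, Anc parent b a ∧ v ∈ U b := by
  induction hreach a with
  | refl => exact ⟨root, .refl, hVroot ▸ hv⟩
  | @tail p q _ hpq ih =>
    obtain rfl | hq := eq_or_ne q root
    · exact ⟨q, .refl, hVroot ▸ hv⟩
    rw [hVp q hq, mem_union, hpq] at hv
    rcases hv with hv | hv
    · exact ⟨q, .refl, hv⟩
    · obtain ⟨b, hbp, hb⟩ := ih hv
      exact ⟨b, hbp.tail hpq, hb⟩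

lemma exists_common_anc_mem (hreach : ∀ a, Anc parent root a)
    (htop : ∀ v, ∃ top, v ∈ U top ∧ ∀ a, v ∈ U a → Anc parent top a)
    (hVroot : Vp root = U root) (hVp : ∀ a, a ≠ root → Vp a = U a ∪ Vp (parent a))
    (a b : X) (v : V) (ha : v ∈ Vp a) (hb : v ∈ Vp b) :
    ∃ c, Anc parent c a ∧ Anc parent c b ∧ v ∈ Vp c := by
  obtain ⟨top, hvtop, htop⟩ := htop v
  obtain ⟨a', haa', hva'⟩ := exists_anc_mem_bag hreach hVroot hVp ha
  obtain ⟨b', hbb', hvb'⟩ := exists_anc_mem_bag hreach hVroot hVp hb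
  exact ⟨top, (htop a' hva').trans haa', (htop b' hvb').trans hbb', bag_subset hVroot hVp top hvtop⟩

end TreeDecomposition

/-- Under the propagation rounding, for every tree node `a ∈ X` and
every set `S ⊆ V_a`, the random output set `A = ⋃_a A_a` satisfies
`Pr[A ∩ S = T] = x(S,T)` for every `T ⊆ S`.

Setting:  `G = (V, E_G)` has a rooted tree decomposition with nodes `X`, root `root`,
parent function `parent` (with a depth function witnessing well-foundedness), and bags
`U a`; the bags containing any fixed vertex of `V` form a nonempty subtree, and every
edge of `G` lies inside some bag.  `Vp a` is the union of the bags on the tree path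
from the root to `a`.  The nonnegative reals `x(S,T)`, given for all
`S ⊆ V_a ∪ V_b` and `T ⊆ S`, sum to one over `T ⊆ S` and satisfy the Sherali-Adams
consistency constraints whenever all the variables involved are defined. -/
theorem stmt_2 {V X : Type*} [Fintype V] [DecidableEq V] [Fintype X] [DecidableEq X]
    (G : SimpleGraph V)
    (parent : X → X) (root : X) (depth : X → ℕ)
    (hroot : parent root = root) (hdroot : depth root = 0)
    (hdepth : ∀ a, a ≠ root → depth a = depth (parent a) + 1)
    (U : X → Finset V)
    (hedge : ∀ u v, G.Adj u v → ∃ a, u ∈ U a ∧ v ∈ U a)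
    (hsubtree : ∀ v : V, ∃ top : X, v ∈ U top ∧ ∀ a, v ∈ U a →
        Anc parent top a ∧ ∀ c, Anc parent top c → Anc parent c a → v ∈ U c)
    (Vp : X → Finset V)
    (hVroot : Vp root = U root)
    (hVp : ∀ a, a ≠ root → Vp a = U a ∪ Vp (parent a))
    (x : Finset V → Finset V → ℝ)
    (hx0 : ∀ S T : Finset V, (∃ a b, S ⊆ Vp a ∪ Vp b) → T ⊆ S → 0 ≤ x S T)
    (hx1 : ∀ S : Finset V, (∃ a b, S ⊆ Vp a ∪ Vp b) → ∑ T ∈ S.powerset, x S T = 1)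
    (hxc : ∀ (S T : Finset V) (u : V), (∃ a b, insert u S ⊆ Vp a ∪ Vp b) →
        T ⊆ S → u ∉ S →
        x S T = x (insert u S) T + x (insert u S) (insert u T)) :
    ∀ (a : X) (S : Finset V), S ⊆ Vp a → ∀ T ⊆ S,
      (∑ f ∈ (Finset.univ : Finset (X → Finset V)).filter
          (fun f => Consistent parent root Vp f ∧ (Finset.univ.biUnion f) ∩ S = T),
        outcomeProb parent root Vp x f) = x S T := by
  intro a S hS T hT
  have hreach := anc_root_of_depth fun a ha => (hdepth a ha).ge
  have htop : ∀ v, ∃ top, v ∈ U top ∧ ∀ a, v ∈ U a → Anc parent top a := fun v =>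
    (hsubtree v).imp fun _ h => ⟨h.1, fun a ha => (h.2 a ha).1⟩
  rw [filter_univ_eq_filter_of_imp_mem (s := Fintype.piFinset fun c => (Vp c).powerset)
    fun f hf => Fintype.mem_piFinset.mpr fun c => mem_powerset.mpr (hf.1.1 c)]
  exact stmt_2_general hroot hreach (parent_subset_of_eq_union hroot hVp)
    (exists_common_anc_mem hreach htop hVroot hVp)
    (fun a C => hx0 (Vp a) C ⟨a, a, subset_union_left⟩)
    (fun a S T u hu => hxc S T u ⟨a, a, hu.trans subset_union_left⟩) a hS hT

end Stmt2
end

section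
/- The instance G₁ satisfies: (i) if H has a cut of size c·m, then G₁ has an s–t-separating cut of capacity exactly 1 that separates at least c units of demand; (ii) every s–t-separating cut of G₁ has capacity at least 1; (iii) if the maximum cut of H has size s·m with s > 0, then every s–t-separating cut of G₁ has sparsity at least 1/s; (iv) every cut of G₁ that does not separate s from t and cuts positive demand has sparsity at least 1. -/
attribute [local instance] Classical.propDecidable

open Finset

namespace Stmt6

/-- The vertex set of the instance `G₁`: `[n]` together with `s = inr false` and
`t = inr true`. -/
abbrev W (n : ℕ) := Fin n ⊕ Bool

variable {n : ℕ}

noncomputable section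

/-- Number of supply edges of the MaxCut instance `H`. -/
def m (H : SimpleGraph (Fin n)) [DecidableRel H.Adj] : ℕ := H.edgeFinset.card

/-- Capacities of `G₁`: each supply edge `{s,i}` and `{t,i}` has capacity
`deg_H(i) / (2m)`. -/
def cap (H : SimpleGraph (Fin n)) [DecidableRel H.Adj] : W n → W n → ℝ :=
  fun u v =>
    match u, v with
    | Sum.inl i, Sum.inr _ => (H.degree i : ℝ) / (2 * m H)
    | Sum.inr _, Sum.inl i => (H.degree i : ℝ) / (2 * m H)
    | _, _ => 0

/-- Demands of `G₁`: demand `1/m` between `i` and `j` for every edge `{i,j}` of `H`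
(and no other demands; in particular no `s`–`t` demand). -/
def dem (H : SimpleGraph (Fin n)) [DecidableRel H.Adj] : W n → W n → ℝ :=
  fun u v =>
    match u, v with
    | Sum.inl i, Sum.inl j => if H.Adj i j then 1 / (m H : ℝ) else 0
    | _, _ => 0

/-- Capacity of the cut `(S, V∖S)` (each crossing pair is counted once). -/
def cutCap (H : SimpleGraph (Fin n)) [DecidableRel H.Adj] (S : Finset (W n)) : ℝ :=
  ∑ u ∈ S, ∑ v ∈ Sᶜ, cap H u v

/-- Demand separated by the cut `(S, V∖S)`. -/
def cutDem (H : SimpleGraph (Fin n)) [DecidableRel H.Adj] (S : Finset (W n)) : ℝ :=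
  ∑ u ∈ S, ∑ v ∈ Sᶜ, dem H u v

/-- Number of edges of `H` crossing the cut `(A, [n]∖A)`. -/
def bdry (H : SimpleGraph (Fin n)) [DecidableRel H.Adj] (A : Finset (Fin n)) : ℕ :=
  ∑ i ∈ A, ∑ j ∈ Aᶜ, if H.Adj i j then 1 else 0

/-!
Write `A` for the part of a cut lying in `[n]`, and `vol A` for the sum of the degrees over `A`.
Each of `s`, `t` pays `vol Aᶜ / 2m` when it lies on the side of `A` and `vol A / 2m` otherwise.
If `s` and `t` lie on opposite sides, the capacity is therefore
`(vol A + vol Aᶜ) / 2m = 1` whatever `A` is, while the separated demand is the fraction of the edges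
of `H` cut by `A`. If they lie on the same side, the capacity is `vol A / m` or `vol Aᶜ / m`, and
each of these volumes is at least the number of edges of `H` leaving `A`.
-/

section Sum

variable {α β : Type*} [Fintype α] [Fintype β] [DecidableEq α] [DecidableEq β]

lemma toLeft_compl (s : Finset (α ⊕ β)) : sᶜ.toLeft = s.toLeftᶜ := by
  ext; simp

lemma toRight_compl (s : Finset (α ⊕ β)) : sᶜ.toRight = s.toRightᶜ := by
  ext; simp

end Sum

lemma card_eq_one_of_mem_iff_notMem {B : Finset Bool} (h : false ∈ B ↔ true ∉ B) : #B = 1 := by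
  rw [card_eq_one]
  by_cases htrue : true ∈ B
  · exact ⟨true, by ext (_ | _) <;> simp [h, htrue]⟩
  · exact ⟨false, by ext (_ | _) <;> simp [h, htrue]⟩

section Volume

variable {V : Type*} [Fintype V] (G : SimpleGraph V) [DecidableRel G.Adj]

/-- The volume of a set of vertices: the sum of their degrees. It measures the capacity of the edges
of `G₁` joining the set to one of the two terminals, up to the factor `1 / (2 * m)`. -/
def vol (A : Finset V) : ℕ := ∑ v ∈ A, G.degree v

lemma vol_add_vol_compl [DecidableEq V] (A : Finset V) :
    vol G A + vol G Aᶜ = 2 * #G.edgeFinset := by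
  rw [vol, vol, sum_add_sum_compl, G.sum_degrees_eq_twice_card_edges]

lemma card_interedges_le_vol (A B : Finset V) : #(G.interedges A B) ≤ vol G A := by
  rw [SimpleGraph.interedges_def, card_filter, sum_product, vol]
  refine sum_le_sum fun v _ => ?_
  rw [← card_filter, ← G.card_neighborFinset_eq_degree, G.neighborFinset_eq_filter]
  exact card_le_card (filter_subset_filter _ (subset_univ B))

end Volume

section Cut

variable (H : SimpleGraph (Fin n)) [DecidableRel H.Adj]

lemma bdry_eq_card_interedges (A : Finset (Fin n)) : bdry H A = #(H.interedges A Aᶜ) := by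
  rw [SimpleGraph.interedges_def, card_filter, sum_product, bdry]

lemma bdry_le_vol (A : Finset (Fin n)) : bdry H A ≤ vol H A :=
  (bdry_eq_card_interedges H A).trans_le (card_interedges_le_vol H A Aᶜ)

lemma bdry_compl (A : Finset (Fin n)) : bdry H Aᶜ = bdry H A := by
  have : Std.Symm H.Adj := ⟨fun _ _ h => h.symm⟩
  rw [bdry_eq_card_interedges, bdry_eq_card_interedges, compl_compl]
  exact Rel.card_interedges_comm (r := H.Adj) Aᶜ A

lemma cutDem_eq_bdry_div (S : Finset (W n)) : cutDem H S = bdry H S.toLeft / m H := by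
  simp only [cutDem, bdry, dem, sum_sum_eq_sum_toLeft_add_sum_toRight, toLeft_compl, sum_const_zero,
    add_zero]
  push_cast
  simp only [sum_div, ite_div, zero_div]

lemma cutDem_disjSum (A : Finset (Fin n)) (B : Finset Bool) :
    cutDem H (A.disjSum B) = bdry H A / m H := by
  rw [cutDem_eq_bdry_div, toLeft_disjSum]

lemma cutCap_eq_vol_div (S : Finset (W n)) :
    cutCap H S =
      (#S.toRightᶜ * vol H S.toLeft + #S.toRight * vol H S.toLeftᶜ) / (2 * m H) := by
  simp only [cutCap, cap, sum_sum_eq_sum_toLeft_add_sum_toRight, toLeft_compl, toRight_compl,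
    sum_const_zero, zero_add, add_zero, sum_const, nsmul_eq_mul, ← mul_sum, ← sum_div, vol,
    Nat.cast_sum]
  ring

variable {H}

lemma cutCap_eq_one_of_separates (hm : 0 < m H) {S : Finset (W n)}
    (hS : Sum.inr false ∈ S ↔ Sum.inr true ∉ S) : cutCap H S = 1 := by
  have hright : #S.toRight = 1 := card_eq_one_of_mem_iff_notMem (by simpa using hS)
  have hright_compl : #S.toRightᶜ = 1 := by simp [card_compl, hright]
  have hvol : (vol H S.toLeft + vol H S.toLeftᶜ : ℝ) = 2 * m H :=
    mod_cast vol_add_vol_compl H S.toLeft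
  rw [cutCap_eq_vol_div, hright, hright_compl, Nat.cast_one, one_mul, one_mul, hvol]
  exact div_self (by positivity)

lemma cutDem_le_cutCap_of_not_separates {S : Finset (W n)}
    (hS : Sum.inr false ∈ S ↔ Sum.inr true ∈ S) : cutDem H S ≤ cutCap H S := by
  have hbdry : (2 * bdry H S.toLeft : ℝ) ≤
      #S.toRightᶜ * vol H S.toLeft + #S.toRight * vol H S.toLeftᶜ := by
    by_cases htrue : Sum.inr true ∈ S
    · have hright : S.toRight = univ := by ext (_ | _) <;> simp [hS, htrue]
      have hle : bdry H S.toLeft ≤ vol H S.toLeftᶜ := bdry_compl H S.toLeft ▸ bdry_le_vol H _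
      simpa [hright, -Fintype.univ_bool] using hle
    · have hright : S.toRight = ∅ := by ext (_ | _) <;> simp [hS, htrue]
      simpa [hright] using bdry_le_vol H S.toLeft
  calc cutDem H S = 2 * bdry H S.toLeft / (2 * m H) := by
        rw [cutDem_eq_bdry_div, mul_div_mul_left _ _ two_ne_zero]
    _ ≤ (#S.toRightᶜ * vol H S.toLeft + #S.toRight * vol H S.toLeftᶜ) / (2 * m H) := by gcongr
    _ = cutCap H S := (cutCap_eq_vol_div H S).symm

end Cut

theorem stmt_6_general (H : SimpleGraph (Fin n)) [DecidableRel H.Adj] (hm : 0 < m H) :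
    (∀ c : ℝ, (∃ A : Finset (Fin n), (bdry H A : ℝ) = c * (m H : ℝ)) →
      ∃ S : Finset (W n), (((Sum.inr false : W n) ∈ S) ↔ ((Sum.inr true : W n) ∉ S)) ∧
        cutCap H S = 1 ∧ c ≤ cutDem H S) ∧
    (∀ S : Finset (W n), (((Sum.inr false : W n) ∈ S) ↔ ((Sum.inr true : W n) ∉ S)) →
      1 ≤ cutCap H S) ∧
    (∀ s : ℝ, 0 < s →
      (∃ A : Finset (Fin n), (bdry H A : ℝ) = s * (m H : ℝ)) →
      (∀ A : Finset (Fin n), (bdry H A : ℝ) ≤ s * (m H : ℝ)) →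
      ∀ S : Finset (W n), (((Sum.inr false : W n) ∈ S) ↔ ((Sum.inr true : W n) ∉ S)) →
        0 < cutDem H S → 1 / s ≤ cutCap H S / cutDem H S) ∧
    (∀ S : Finset (W n), (((Sum.inr false : W n) ∈ S) ↔ ((Sum.inr true : W n) ∈ S)) →
      0 < cutDem H S → 1 ≤ cutCap H S / cutDem H S) := by
  refine ⟨?_, fun S hS => (cutCap_eq_one_of_separates hm hS).ge, ?_, fun S hS hpos =>
    (one_le_div hpos).2 (cutDem_le_cutCap_of_not_separates hS)⟩
  · rintro c ⟨A, hA⟩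
    have hS : Sum.inr false ∈ A.disjSum {false} ↔ Sum.inr true ∉ A.disjSum {false} := by simp
    have hdem : cutDem H (A.disjSum {false}) = c := by
      rw [cutDem_disjSum, hA, mul_div_cancel_right₀ c (by positivity)]
    exact ⟨A.disjSum {false}, hS, cutCap_eq_one_of_separates hm hS, hdem.ge⟩
  · intro s _ _ hmax S hS hpos
    have hdem : cutDem H S ≤ s := by
      rw [cutDem_eq_bdry_div]
      exact div_le_of_le_mul₀ (by positivity) (by positivity) (hmax S.toLeft)
    rw [cutCap_eq_one_of_separates hm hS]
    exact one_div_le_one_div_of_le hpos hdem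

/-- The instance `G₁` satisfies:
(i) if `H` has a cut of size `c·m`, then `G₁` has an `s–t`-separating cut of capacity
exactly `1` that separates at least `c` units of demand;
(ii) every `s–t`-separating cut of `G₁` has capacity at least `1`;
(iii) if the maximum cut of `H` has size `s·m` with `s > 0`, then every
`s–t`-separating cut of `G₁` (of positive demand, so that the sparsity is defined)
has sparsity at least `1/s`;
(iv) every cut of `G₁` that does not separate `s` from `t` and cuts positive demand
has sparsity at least `1`. -/
theorem stmt_6 (H : SimpleGraph (Fin n)) [DecidableRel H.Adj]
    (hconn : H.Connected) (hm : 0 < m H) :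
    (∀ c : ℝ, (∃ A : Finset (Fin n), (bdry H A : ℝ) = c * (m H : ℝ)) →
      ∃ S : Finset (W n), (((Sum.inr false : W n) ∈ S) ↔ ((Sum.inr true : W n) ∉ S)) ∧
        cutCap H S = 1 ∧ c ≤ cutDem H S) ∧
    (∀ S : Finset (W n), (((Sum.inr false : W n) ∈ S) ↔ ((Sum.inr true : W n) ∉ S)) →
      1 ≤ cutCap H S) ∧
    (∀ s : ℝ, 0 < s →
      (∃ A : Finset (Fin n), (bdry H A : ℝ) = s * (m H : ℝ)) →
      (∀ A : Finset (Fin n), (bdry H A : ℝ) ≤ s * (m H : ℝ)) →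
      ∀ S : Finset (W n), (((Sum.inr false : W n) ∈ S) ↔ ((Sum.inr true : W n) ∉ S)) →
        0 < cutDem H S → 1 / s ≤ cutCap H S / cutDem H S) ∧
    (∀ S : Finset (W n), (((Sum.inr false : W n) ∈ S) ↔ ((Sum.inr true : W n) ∈ S)) →
      0 < cutDem H S → 1 ≤ cutCap H S / cutDem H S) :=
  stmt_6_general H hm

end

end Stmt6
end

section
/- If the base instance G₁ has an admissible cut (A, Ā) of capacity cap(A,Ā) separating dem(A,Ā) units of demand, then for every ℓ ≥ 1 the powered instance G_ℓ has an admissible cut of capacity (cap(A,Ā))^ℓ that separates dem(A,Ā)·Σ_{i=0}^{ℓ−1} cap(A,Ā)^i units of demand. -/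
attribute [local instance] Classical.propDecidable

open Finset

namespace Stmt7

/-- A Sparsest Cut instance: a finite vertex set `V` with two designated vertices
`s` and `t`, a finite set `E` of (oriented) supply edges with capacities `cap`, and a
finite set `Dm` of demand pairs with demands `dem`. -/
structure SCI where
  V : Type
  fV : Fintype V
  dV : DecidableEq V
  s : V
  t : V
  E : Finset (V × V)
  cap : V × V → ℝ
  Dm : Finset (V × V)
  dem : V × V → ℝ

attribute [instance] SCI.fV SCI.dV

namespace SCI

/-- Capacity of a cut `(S, V∖S)`: total capacity of supply edges crossing it. -/
noncomputable def cutCap (I : SCI) (S : Finset I.V) : ℝ :=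
  ∑ e ∈ I.E.filter (fun e => ¬((e.1 ∈ S) ↔ (e.2 ∈ S))), I.cap e

/-- Demand separated by a cut `(S, V∖S)`: total demand of demand pairs crossing it. -/
noncomputable def cutDem (I : SCI) (S : Finset I.V) : ℝ :=
  ∑ q ∈ I.Dm.filter (fun q => ¬((q.1 ∈ S) ↔ (q.2 ∈ S))), I.dem q

end SCI

/-- Vertex set obtained by replacing each capacity edge `e = (u,v)` of `G1` by a copy
of `Gp`, identifying the `s` of the copy with `u` and its `t` with `v`:  the vertices
of `G1` together with, for every edge `e` of `G1`, a copy of the interior (non-`s`,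
non-`t`) vertices of `Gp`. -/
abbrev glueV (G1 Gp : SCI) : Type :=
  G1.V ⊕ ({e // e ∈ G1.E} × {v : Gp.V // v ≠ Gp.s ∧ v ≠ Gp.t})

/-- Placement of a vertex `v` of the copy of `Gp` corresponding to edge `e` of `G1`:
the copy's `s` is identified with `e.1`, its `t` with `e.2`, and interior vertices
keep their identity inside the copy. -/
noncomputable def embed (G1 Gp : SCI) (e : {e // e ∈ G1.E}) (v : Gp.V) : glueV G1 Gp :=
  if h1 : v = Gp.s then Sum.inl e.1.1
  else if h2 : v = Gp.t then Sum.inl e.1.2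
  else Sum.inr (e, ⟨v, h1, h2⟩)

/-- One step of the powering operation: replace every capacity edge `e = (u,v)` of
`G1` by a copy of `Gp` (scaled by `cap e`, with its `s` identified with `u` and its
`t` with `v`), and retain the demand edges of `G1` as the new top-level demands. -/
noncomputable def glue (G1 Gp : SCI) : SCI where
  V := glueV G1 Gp
  fV := inferInstance
  dV := inferInstance
  s := Sum.inl G1.s
  t := Sum.inl G1.t
  E := G1.E.attach.biUnion fun e =>
        Gp.E.image fun f => (embed G1 Gp e f.1, embed G1 Gp e f.2)
  cap := fun p => ∑ e ∈ G1.E.attach, ∑ f ∈ Gp.E,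
        if (embed G1 Gp e f.1, embed G1 Gp e f.2) = p then G1.cap e.1 * Gp.cap f else 0
  Dm := (G1.Dm.image fun q => ((Sum.inl q.1 : glueV G1 Gp), (Sum.inl q.2 : glueV G1 Gp))) ∪
        (G1.E.attach.biUnion fun e =>
          Gp.Dm.image fun f => (embed G1 Gp e f.1, embed G1 Gp e f.2))
  dem := fun p =>
      (∑ q ∈ G1.Dm,
        if ((Sum.inl q.1 : glueV G1 Gp), (Sum.inl q.2 : glueV G1 Gp)) = p
        then G1.dem q else 0) +
      ∑ e ∈ G1.E.attach, ∑ f ∈ Gp.Dm,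
        if (embed G1 Gp e f.1, embed G1 Gp e f.2) = p then G1.cap e.1 * Gp.dem f else 0

/-- The powered instance: `Gpow G1 k` is the instance `G_{k+1}` of the paper, i.e.
`Gpow G1 0 = G₁` and `Gpow G1 k = G_{k+1}` is obtained from `G₁` by replacing each
capacity edge with a copy of `G_k`. -/
noncomputable def Gpow (G1 : SCI) : ℕ → SCI
  | 0 => G1
  | k + 1 => glue G1 (Gpow G1 k)

/-!
A cut `B` of `Gp` that separates `s` from `t` contracts every copy of `Gp` in `glue G1 Gp` onto the
two endpoints of the edge it replaces: the side of `s` goes to the tail and the side of `t` to the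
head. The preimage of a cut `A` of `G1` under this retraction restricts to `A` on the vertices of
`G1`. On the copy replacing an edge `e`, it restricts to `B` or its complement if `e` crosses `A`,
and does not cut the copy at all otherwise. As a copy is scaled by the capacity of `e`, this gives
`cap = cap A * cap B` and `dem = dem A + cap A * dem B`, and iterating from `B = A` yields
the power and the geometric sum.
-/

section Boundary

variable {V W X : Type*}

/-- The pairs of `T` with exactly one endpoint in `S`, written `∂(S)` for the edge set `T`. -/
def boundary [DecidableEq V] (T : Finset (V × V)) (S : Finset V) : Finset (V × V) :=
  T.filter fun p => ¬(p.1 ∈ S ↔ p.2 ∈ S)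

theorem mem_boundary [DecidableEq V] {T : Finset (V × V)} {S : Finset V} {p : V × V} :
    p ∈ boundary T S ↔ p ∈ T ∧ ¬(p.1 ∈ S ↔ p.2 ∈ S) := by
  simp only [boundary, mem_filter]

/-- The preimage of a finite vertex set under a vertex map. Unlike `Finset.preimage` it asks for a
finite domain instead of injectivity, since the maps that contract or identify vertices are not
injective. -/
noncomputable def pullback [Fintype V] (φ : V → W) (S : Finset W) : Finset V :=
  univ.filter fun v => φ v ∈ S

theorem mem_pullback [Fintype V] {φ : V → W} {S : Finset W} {v : V} :
    v ∈ pullback φ S ↔ φ v ∈ S := by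
  simp only [pullback, mem_filter, mem_univ, true_and]

theorem pullback_id [Fintype V] (S : Finset V) : pullback id S = S := by
  ext v
  rw [mem_pullback, id]

theorem pullback_pullback [Fintype V] [Fintype W] (φ : V → W) (ψ : W → X) (S : Finset X) :
    pullback φ (pullback ψ S) = pullback (ψ ∘ φ) S := by
  ext v
  simp only [mem_pullback, Function.comp_apply]

theorem sum_boundary_pushforward {M : Type*} [AddCommMonoid M] [Fintype V] [DecidableEq V]
    [DecidableEq W] (φ : V → W)
    {J : Finset (V × V)} {T : Finset (W × W)} (hT : ∀ f ∈ J, (φ f.1, φ f.2) ∈ T)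
    (S : Finset W) (w : V × V → M) :
    ∑ p ∈ boundary T S, ∑ f ∈ J, (if (φ f.1, φ f.2) = p then w f else 0) =
      ∑ f ∈ boundary J (pullback φ S), w f := by
  rw [sum_comm, boundary, boundary, sum_filter]
  refine sum_congr rfl fun f hf => ?_
  simp only [sum_ite_eq, mem_filter, hT f hf, true_and, mem_pullback]

end Boundary

namespace SCI

/-- A cut is admissible if it separates `s` from `t`. -/
def IsAdmissible (I : SCI) (S : Finset I.V) : Prop :=
  ¬(I.s ∈ S ↔ I.t ∈ S)

theorem cutCap_eq_sum_boundary (I : SCI) (S : Finset I.V) :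
    I.cutCap S = ∑ e ∈ boundary I.E S, I.cap e :=
  rfl

theorem cutDem_eq_sum_boundary (I : SCI) (S : Finset I.V) :
    I.cutDem S = ∑ q ∈ boundary I.Dm S, I.dem q :=
  rfl

end SCI

section Glue

variable {G1 Gp : SCI}

theorem isAdmissible_glue_iff {S : Finset (glue G1 Gp).V} :
    (glue G1 Gp).IsAdmissible S ↔ G1.IsAdmissible (pullback Sum.inl S) :=
  (not_congr (iff_congr mem_pullback mem_pullback)).symm

theorem cutCap_glue (S : Finset (glue G1 Gp).V) :
    (glue G1 Gp).cutCap S =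
      ∑ e ∈ G1.E.attach, G1.cap e.1 * Gp.cutCap (pullback (embed G1 Gp e) S) := by
  have edge_mem (e : {e // e ∈ G1.E}) :
      ∀ f ∈ Gp.E, (embed G1 Gp e f.1, embed G1 Gp e f.2) ∈ (glue G1 Gp).E := fun f hf =>
    mem_biUnion.2 ⟨e, mem_attach _ e, mem_image_of_mem _ hf⟩
  refine sum_comm.trans (sum_congr rfl fun e _ => ?_)
  rw [SCI.cutCap_eq_sum_boundary, mul_sum]
  exact sum_boundary_pushforward (embed G1 Gp e) (edge_mem e) S fun f => G1.cap e.1 * Gp.cap f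

theorem cutDem_glue (S : Finset (glue G1 Gp).V) :
    (glue G1 Gp).cutDem S = G1.cutDem (pullback Sum.inl S) +
      ∑ e ∈ G1.E.attach, G1.cap e.1 * Gp.cutDem (pullback (embed G1 Gp e) S) := by
  have base_mem : ∀ q ∈ G1.Dm, (Sum.inl q.1, Sum.inl q.2) ∈ (glue G1 Gp).Dm := fun q hq =>
    mem_union_left _ (mem_image_of_mem _ hq)
  have copy_mem (e : {e // e ∈ G1.E}) :
      ∀ f ∈ Gp.Dm, (embed G1 Gp e f.1, embed G1 Gp e f.2) ∈ (glue G1 Gp).Dm := fun f hf =>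
    mem_union_right _ (mem_biUnion.2 ⟨e, mem_attach _ e, mem_image_of_mem _ hf⟩)
  refine sum_add_distrib.trans (congrArg₂ (· + ·) ?_ ?_)
  · exact sum_boundary_pushforward Sum.inl base_mem S G1.dem
  · refine sum_comm.trans (sum_congr rfl fun e _ => ?_)
    rw [SCI.cutDem_eq_sum_boundary, mul_sum]
    exact sum_boundary_pushforward (embed G1 Gp e) (copy_mem e) S fun f => G1.cap e.1 * Gp.dem f

/-- The endpoint of the pair `e` onto which `v` is contracted along the cut `B`: the first one if
`v` lies on the same side of `B` as `s`, and the second one otherwise. -/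
noncomputable def sideEndpoint {V : Type*} (B : Finset Gp.V) (e : V × V) (v : Gp.V) : V :=
  if v ∈ B ↔ Gp.s ∈ B then e.1 else e.2

/-- The retraction of the glued graph onto `G1` that contracts each copy of `Gp` along `B`. -/
noncomputable def retract (B : Finset Gp.V) : glueV G1 Gp → G1.V :=
  Sum.elim id fun x => sideEndpoint B x.1.1 x.2.1

theorem retract_comp_embed {B : Finset Gp.V} (hB : Gp.IsAdmissible B) (e : {e // e ∈ G1.E}) :
    retract B ∘ embed G1 Gp e = sideEndpoint B e.1 := by
  ext v
  rw [Function.comp_apply, embed]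
  split_ifs with hs ht
  · simp only [retract, sideEndpoint, Sum.elim_inl, id, hs, if_true]
  · have side_t : ¬(Gp.t ∈ B ↔ Gp.s ∈ B) := fun h => hB h.symm
    simp only [retract, sideEndpoint, Sum.elim_inl, id, ht, side_t, if_false]
  · rfl

theorem boundary_pullback_sideEndpoint {V : Type*} (T : Finset (Gp.V × Gp.V)) (A : Finset V)
    (B : Finset Gp.V) (e : V × V) :
    boundary T (pullback (sideEndpoint B e) A) =
      if ¬(e.1 ∈ A ↔ e.2 ∈ A) then boundary T B else ∅ := by
  ext f
  split_ifs <;> simp only [mem_boundary, mem_pullback, sideEndpoint, notMem_empty] <;>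
    split_ifs <;> tauto

/-- The cut of `glue G1 Gp` that lifts `A` by cutting the copy in each edge crossing `A` along
`B`. -/
noncomputable def liftCut (A : Finset G1.V) (B : Finset Gp.V) : Finset (glue G1 Gp).V :=
  pullback (retract B) A

theorem pullback_inl_liftCut (A : Finset G1.V) (B : Finset Gp.V) :
    pullback Sum.inl (liftCut A B) = A :=
  (pullback_pullback Sum.inl (retract B) A).trans (pullback_id A)

theorem pullback_embed_liftCut (A : Finset G1.V) {B : Finset Gp.V} (hB : Gp.IsAdmissible B)
    (e : {e // e ∈ G1.E}) :
    pullback (embed G1 Gp e) (liftCut A B) = pullback (sideEndpoint B e.1) A :=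
  (pullback_pullback (embed G1 Gp e) (retract B) A).trans (by rw [retract_comp_embed hB])

theorem isAdmissible_liftCut {A : Finset G1.V} (hA : G1.IsAdmissible A) (B : Finset Gp.V) :
    (glue G1 Gp).IsAdmissible (liftCut A B) :=
  isAdmissible_glue_iff.2 ((pullback_inl_liftCut A B).symm ▸ hA)

theorem sum_cap_mul_sum_boundary_liftCut (A : Finset G1.V) {B : Finset Gp.V}
    (hB : Gp.IsAdmissible B) (T : Finset (Gp.V × Gp.V)) (w : Gp.V × Gp.V → ℝ) :
    ∑ e ∈ G1.E.attach,
        G1.cap e.1 * ∑ f ∈ boundary T (pullback (embed G1 Gp e) (liftCut A B)), w f =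
      G1.cutCap A * ∑ f ∈ boundary T B, w f := by
  simp only [pullback_embed_liftCut A hB, boundary_pullback_sideEndpoint]
  rw [SCI.cutCap, sum_filter, sum_mul, ← sum_attach G1.E]
  refine sum_congr rfl fun e _ => ?_
  split_ifs
  · rw [sum_empty, mul_zero, zero_mul]
  · rfl

theorem cutCap_liftCut (A : Finset G1.V) {B : Finset Gp.V} (hB : Gp.IsAdmissible B) :
    (glue G1 Gp).cutCap (liftCut A B) = G1.cutCap A * Gp.cutCap B :=
  (cutCap_glue _).trans (sum_cap_mul_sum_boundary_liftCut A hB Gp.E Gp.cap)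

theorem cutDem_liftCut (A : Finset G1.V) {B : Finset Gp.V} (hB : Gp.IsAdmissible B) :
    (glue G1 Gp).cutDem (liftCut A B) = G1.cutDem A + G1.cutCap A * Gp.cutDem B := by
  rw [cutDem_glue, pullback_inl_liftCut]
  exact congrArg _ (sum_cap_mul_sum_boundary_liftCut A hB Gp.Dm Gp.dem)

end Glue

section Powering

variable {G1 : SCI}

/-- The cut of the powered instance `Gpow G1 k` obtained by lifting `A` through all levels. -/
noncomputable def powCut (A : Finset G1.V) : (k : ℕ) → Finset (Gpow G1 k).V
  | 0 => A
  | k + 1 => liftCut A (powCut A k)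

variable {A : Finset G1.V}

theorem isAdmissible_powCut (hA : G1.IsAdmissible A) : ∀ k, (Gpow G1 k).IsAdmissible (powCut A k)
  | 0 => hA
  | k + 1 => isAdmissible_liftCut hA (powCut A k)

theorem cutCap_powCut (hA : G1.IsAdmissible A) (k : ℕ) :
    (Gpow G1 k).cutCap (powCut A k) = G1.cutCap A ^ (k + 1) := by
  induction k with
  | zero => exact (pow_one _).symm
  | succ k ih =>
    calc (Gpow G1 (k + 1)).cutCap (powCut A (k + 1))
        = G1.cutCap A * (Gpow G1 k).cutCap (powCut A k) :=
          cutCap_liftCut A (isAdmissible_powCut hA k)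
      _ = G1.cutCap A ^ (k + 1 + 1) := by rw [ih, ← pow_succ']

theorem cutDem_powCut (hA : G1.IsAdmissible A) (k : ℕ) :
    (Gpow G1 k).cutDem (powCut A k) =
      G1.cutDem A * ∑ i ∈ range (k + 1), G1.cutCap A ^ i := by
  induction k with
  | zero => rw [zero_add, geom_sum_one, mul_one]; rfl
  | succ k ih =>
    calc (Gpow G1 (k + 1)).cutDem (powCut A (k + 1))
        = G1.cutDem A + G1.cutCap A * (Gpow G1 k).cutDem (powCut A k) :=
          cutDem_liftCut A (isAdmissible_powCut hA k)
      _ = G1.cutDem A * ∑ i ∈ range (k + 1 + 1), G1.cutCap A ^ i := by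
          rw [ih, geom_sum_succ (n := k + 1)]; ring

end Powering

theorem stmt_7_general (G1 : SCI) (A : Finset G1.V) (hA : ¬((G1.s ∈ A) ↔ (G1.t ∈ A))) (k : ℕ) :
    ∃ B : Finset (Gpow G1 k).V,
      ¬(((Gpow G1 k).s ∈ B) ↔ ((Gpow G1 k).t ∈ B)) ∧
      (Gpow G1 k).cutCap B = G1.cutCap A ^ (k + 1) ∧
      (Gpow G1 k).cutDem B = G1.cutDem A * ∑ i ∈ Finset.range (k + 1), G1.cutCap A ^ i :=
  ⟨powCut A k, isAdmissible_powCut hA k, cutCap_powCut hA k, cutDem_powCut hA k⟩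

/-- If the base instance `G₁` has an admissible (`s`–`t`-separating)
cut `(A, Ā)` of capacity `cap(A,Ā)` separating `dem(A,Ā)` units of demand, then for
every `ℓ ≥ 1` the powered instance `G_ℓ` has an admissible cut of capacity
`cap(A,Ā)^ℓ` that separates `dem(A,Ā) · Σ_{i=0}^{ℓ−1} cap(A,Ā)^i` units of demand. -/
theorem stmt_7 (G1 : SCI) (hst : G1.s ≠ G1.t)
    (hloop : ∀ e ∈ G1.E, e.1 ≠ e.2)
    (hcap : ∀ e ∈ G1.E, 0 < G1.cap e)
    (hdem : ∀ q ∈ G1.Dm, 0 ≤ G1.dem q)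
    (A : Finset G1.V) (hA : ¬((G1.s ∈ A) ↔ (G1.t ∈ A)))
    (ℓ : ℕ) (hℓ : 1 ≤ ℓ) :
    ∃ B : Finset (Gpow G1 (ℓ - 1)).V,
      ¬(((Gpow G1 (ℓ - 1)).s ∈ B) ↔ ((Gpow G1 (ℓ - 1)).t ∈ B)) ∧
      (Gpow G1 (ℓ - 1)).cutCap B = G1.cutCap A ^ ℓ ∧
      (Gpow G1 (ℓ - 1)).cutDem B = G1.cutDem A * ∑ i ∈ Finset.range ℓ, G1.cutCap A ^ i := by
  obtain ⟨k, rfl⟩ := Nat.exists_eq_add_of_le' hℓ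
  exact stmt_7_general G1 A hA k

end Stmt7
end

section
/- For any Sparsest Cut instance (G,D) in which the supply graph G is connected and at least one cut separates positive demand, there exists a sparsest cut (S, V∖S) — a cut of minimum sparsity — such that both induced subgraphs G[S] and G[V∖S] are connected. -/
attribute [local instance] Classical.propDecidable

open Finset

namespace Stmt8

/-- Total capacity of the supply edges crossing the cut `(S, V∖S)`. -/
noncomputable def cutCap {V : Type*} [Fintype V] (G : SimpleGraph V)
    (cap : V → V → ℝ) (S : Finset V) : ℝ :=
  ∑ u ∈ S, ∑ v ∈ Sᶜ, if G.Adj u v then cap u v else 0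

/-- Total demand crossing the cut `(S, V∖S)`. -/
noncomputable def cutDem {V : Type*} [Fintype V] (dem : V → V → ℝ) (S : Finset V) : ℝ :=
  ∑ u ∈ S, ∑ v ∈ Sᶜ, dem u v

/-!
If a side of a sparsest cut splits into two parts with no supply edge between them, the capacities
of the parts add up to the capacity of the whole while the demands are subadditive, so by the
mediant inequality one of the parts is again the side of a sparsest cut. Hence an inclusion-minimal
side is connected. Now take a maximal `S` among the connected sides of sparsest cuts. If `V ∖ S`
split into `A` and `B`, then, say, `V ∖ A` would give a sparsest cut; it is connected, because `G`
and `S` are, and it strictly contains `S`. For directed weights the two sides of a cut still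
play the same role, once exchanging them is taken to reverse the weights.
-/

section Connectivity

variable {V : Type*} {G : SimpleGraph V} {s A B : Set V}

/-- `A` and `B` are disjoint vertex sets with no edge of `G` between them; a vertex set is connected
exactly when it is not the union of two nonempty such sets. -/
structure IsSeparated (G : SimpleGraph V) (A B : Set V) : Prop where
  disjoint : Disjoint A B
  not_adj : ∀ u ∈ A, ∀ v ∈ B, ¬ G.Adj u v

theorem IsSeparated.symm (h : IsSeparated G A B) : IsSeparated G B A :=
  ⟨h.disjoint.symm, fun u hu v hv huv => h.not_adj v hv u hu huv.symm⟩

theorem IsSeparated.mono {A' B' : Set V} (h : IsSeparated G A B) (hA : A' ⊆ A) (hB : B' ⊆ B) :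
    IsSeparated G A' B' :=
  ⟨h.disjoint.mono hA hB, fun u hu v hv => h.not_adj u (hA hu) v (hB hv)⟩

theorem IsSeparated.union_right {C : Set V} (hB : IsSeparated G A B) (hC : IsSeparated G A C) :
    IsSeparated G A (B ∪ C) :=
  ⟨hB.disjoint.union_right hC.disjoint,
    fun u hu v hv => hv.elim (hB.not_adj u hu v) (hC.not_adj u hu v)⟩

theorem IsSeparated.eq_empty_or_eq_empty (h : IsSeparated G A B)
    (hAB : (G.induce (A ∪ B)).Preconnected) : A = ∅ ∨ B = ∅ := by
  by_contra! ⟨⟨a, ha⟩, ⟨b, hb⟩⟩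
  obtain ⟨p⟩ := hAB ⟨a, .inl ha⟩ ⟨b, .inr hb⟩
  obtain ⟨d, -, hfst, hsnd⟩ := p.exists_boundary_dart (Subtype.val ⁻¹' A) ha
    (h.disjoint.notMem_of_mem_right hb)
  exact h.not_adj _ hfst _ (d.snd.2.resolve_left hsnd) d.adj

theorem preconnected_induce_iff_forall_isSeparated :
    (G.induce s).Preconnected ↔
      ∀ A B : Set V, IsSeparated G A B → A ∪ B = s → A = ∅ ∨ B = ∅ := by
  refine ⟨fun h A B hsep hAB => hsep.eq_empty_or_eq_empty (hAB ▸ h), fun h x y => ?_⟩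
  let R : Set s := {z | (G.induce s).Reachable x z}
  have hsep : IsSeparated G (Subtype.val '' R) (Subtype.val '' Rᶜ) := by
    refine ⟨Set.disjoint_image_iff Subtype.val_injective |>.2 disjoint_compl_right, ?_⟩
    rintro _ ⟨u, hu, rfl⟩ _ ⟨v, hv, rfl⟩ huv
    exact hv (hu.trans (SimpleGraph.Adj.reachable huv))
  have hunion : Subtype.val '' R ∪ Subtype.val '' Rᶜ = s := by
    rw [← Set.image_union, Set.union_compl_self, Subtype.coe_image_univ]
  rcases h _ _ hsep hunion with hR | hR
  · exact absurd (Set.image_eq_empty.1 hR) (Set.Nonempty.ne_empty ⟨x, .refl x⟩)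
  · exact Set.eq_univ_iff_forall.1 (Set.compl_empty_iff.1 (Set.image_eq_empty.1 hR)) y

theorem connected_induce_iff_forall_isSeparated :
    (G.induce s).Connected ↔
      s.Nonempty ∧ ∀ A B : Set V, IsSeparated G A B → A ∪ B = s → A = ∅ ∨ B = ∅ := by
  rw [SimpleGraph.connected_iff, preconnected_induce_iff_forall_isSeparated,
    Set.nonempty_coe_sort, and_comm]

theorem IsSeparated.eq_empty_or_eq_empty_of_union_eq_univ (h : IsSeparated G A B)
    (hG : G.Preconnected) (hAB : A ∪ B = Set.univ) : A = ∅ ∨ B = ∅ :=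
  preconnected_induce_iff_forall_isSeparated.1
    (G.induceUnivIso.preconnected_iff.2 hG) A B h hAB

theorem IsSeparated.connected_induce_compl (h : IsSeparated G A B) (hG : G.Preconnected)
    (hs : (G.induce s).Connected) (hAB : A ∪ B = sᶜ) : (G.induce Aᶜ).Connected := by
  obtain ⟨⟨x, hx⟩, hs⟩ := connected_induce_iff_forall_isSeparated.1 hs
  have hsA : s ⊆ Aᶜ := Set.subset_compl_comm.1 (hAB ▸ Set.subset_union_left)
  -- A part of `Aᶜ` that misses `s` lies in `B`, so no edge of `G` leaves it.
  have eq_empty_of_disjoint {P Q : Set V} (hPQ : IsSeparated G P Q) (hunion : P ∪ Q = Aᶜ)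
      (hsP : Disjoint s P) : P = ∅ := by
    have hPA : P ⊆ Aᶜ := hunion ▸ Set.subset_union_left
    have hPAB : P ⊆ A ∪ B := hAB ▸ hsP.subset_compl_left
    have hPB : P ⊆ B := fun u hu => (hPAB hu).resolve_left (hPA hu)
    have hxQ : x ∈ Q := (hunion ▸ hsA hx : x ∈ P ∪ Q).resolve_left (hsP.notMem_of_mem_left hx)
    have hP : IsSeparated G P (Q ∪ A) := hPQ.union_right (h.symm.mono hPB subset_rfl)
    refine (hP.eq_empty_or_eq_empty_of_union_eq_univ hG ?_).resolve_right
      (Set.Nonempty.ne_empty ⟨x, .inl hxQ⟩)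
    rw [← Set.union_assoc, hunion, Set.compl_union_self]
  refine connected_induce_iff_forall_isSeparated.2 ⟨⟨x, hsA hx⟩, fun P Q hPQ hunion => ?_⟩
  have hsplit : s ∩ P ∪ s ∩ Q = s := by
    rw [← Set.inter_union_distrib_left, hunion, Set.inter_eq_left.2 hsA]
  have hsPQ := hs _ _ (hPQ.mono Set.inter_subset_right Set.inter_subset_right) hsplit
  simp only [← Set.disjoint_iff_inter_eq_empty] at hsPQ
  exact hsPQ.imp (eq_empty_of_disjoint hPQ hunion)
    (eq_empty_of_disjoint hPQ.symm (Set.union_comm P Q ▸ hunion))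

end Connectivity

section Cuts

variable {V : Type*} [Fintype V] {G : SimpleGraph V} {w cap dem : V → V → ℝ} {S A B : Finset V}

theorem cutDem_nonneg (hw : ∀ u v, 0 ≤ w u v) (S : Finset V) : 0 ≤ cutDem w S :=
  sum_nonneg fun u _ => sum_nonneg fun v _ => hw u v

theorem cutCap_nonneg (hcap : ∀ u v, G.Adj u v → 0 ≤ cap u v) (S : Finset V) :
    0 ≤ cutCap G cap S := by
  refine cutDem_nonneg (w := fun u v => if G.Adj u v then cap u v else 0) (fun u v => ?_) S
  split_ifs with huv
  exacts [hcap u v huv, le_rfl]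

theorem cutDem_compl (w : V → V → ℝ) (S : Finset V) : cutDem w Sᶜ = cutDem (flip w) S := by
  rw [cutDem, compl_compl, sum_comm]
  rfl

theorem cutCap_compl (G : SimpleGraph V) (cap : V → V → ℝ) (S : Finset V) :
    cutCap G cap Sᶜ = cutCap G (flip cap) S := by
  refine (cutDem_compl _ S).trans ?_
  simp only [cutDem, cutCap, flip, G.adj_comm]

theorem cutDem_union_le (hw : ∀ u v, 0 ≤ w u v) (A B : Finset V) :
    cutDem w (A ∪ B) ≤ cutDem w A + cutDem w B := by
  have sum_compl_le {S T : Finset V} (hST : S ⊆ T) (u : V) :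
      ∑ v ∈ Tᶜ, w u v ≤ ∑ v ∈ Sᶜ, w u v :=
    sum_le_sum_of_subset_of_nonneg (compl_subset_compl.2 hST) fun v _ _ => hw u v
  calc cutDem w (A ∪ B)
      ≤ ∑ u ∈ A, ∑ v ∈ (A ∪ B)ᶜ, w u v + ∑ u ∈ B, ∑ v ∈ (A ∪ B)ᶜ, w u v := by
        rw [cutDem, ← sum_union_inter]
        exact le_add_of_nonneg_right (sum_nonneg fun u _ => sum_nonneg fun v _ => hw u v)
    _ ≤ cutDem w A + cutDem w B :=
        add_le_add (sum_le_sum fun u _ => sum_compl_le subset_union_left u)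
          (sum_le_sum fun u _ => sum_compl_le subset_union_right u)

theorem cutCap_union_of_isSeparated (cap : V → V → ℝ) (h : IsSeparated G (A : Set V) B) :
    cutCap G cap (A ∪ B) = cutCap G cap A + cutCap G cap B := by
  have sum_compl_union {P Q : Finset V} (hPQ : IsSeparated G (P : Set V) Q) {u : V} (hu : u ∈ P) :
      (∑ v ∈ (P ∪ Q)ᶜ, if G.Adj u v then cap u v else 0) =
        ∑ v ∈ Pᶜ, if G.Adj u v then cap u v else 0 := by
    refine sum_subset (compl_subset_compl.2 subset_union_left) fun v hvP hv => ?_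
    have hvQ : v ∈ Q := by simpa [mem_compl.1 hvP] using hv
    exact if_neg (hPQ.not_adj u hu v hvQ)
  rw [cutCap, sum_union (disjoint_coe.1 h.disjoint)]
  refine congr_arg₂ (· + ·) (sum_congr rfl fun u hu => sum_compl_union h hu)
    (sum_congr rfl fun u hu => ?_)
  rw [union_comm, sum_compl_union h.symm hu]

end Cuts

section SparsestCut

variable {V : Type*} [Fintype V] {G : SimpleGraph V} {cap dem : V → V → ℝ} {S A B : Finset V}

/-- `(S, V ∖ S)` has minimum sparsity among the cuts of positive demand. The weights need not be
symmetric, in which case only what goes from `S` to `V ∖ S` counts. -/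
structure IsSparsestCut (G : SimpleGraph V) (cap dem : V → V → ℝ) (S : Finset V) : Prop where
  cutDem_pos : 0 < cutDem dem S
  sparsity_le : ∀ T : Finset V, 0 < cutDem dem T →
    cutCap G cap S / cutDem dem S ≤ cutCap G cap T / cutDem dem T

theorem exists_isSparsestCut (G : SimpleGraph V) (cap : V → V → ℝ)
    (hpos : ∃ S : Finset V, 0 < cutDem dem S) : ∃ S, IsSparsestCut G cap dem S := by
  obtain ⟨S, hS, hmin⟩ := Set.exists_min_image {S : Finset V | 0 < cutDem dem S}
    (fun S => cutCap G cap S / cutDem dem S) (Set.toFinite _) hpos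
  exact ⟨S, hS, hmin⟩

namespace IsSparsestCut

theorem flip_compl (h : IsSparsestCut G cap dem S) :
    IsSparsestCut G (flip cap) (flip dem) Sᶜ := by
  refine ⟨?_, fun T hT => ?_⟩
  · rw [← cutDem_compl, compl_compl]
    exact h.cutDem_pos
  · simp only [← cutDem_compl, ← cutCap_compl, compl_compl] at hT ⊢
    exact h.sparsity_le Tᶜ hT

theorem nonempty (h : IsSparsestCut G cap dem S) : S.Nonempty := by
  rw [nonempty_iff_ne_empty]
  rintro rfl
  simpa [cutDem] using h.cutDem_pos

theorem sparsity_mul_cutDem_le (h : IsSparsestCut G cap dem S)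
    (hcap : ∀ u v, G.Adj u v → 0 ≤ cap u v) (hdem : ∀ u v, 0 ≤ dem u v) (T : Finset V) :
    cutCap G cap S / cutDem dem S * cutDem dem T ≤ cutCap G cap T := by
  rcases (cutDem_nonneg hdem T).eq_or_lt with hT | hT
  · rw [← hT, mul_zero]
    exact cutCap_nonneg hcap T
  · exact (le_div_iff₀ hT).1 (h.sparsity_le T hT)

theorem left_of_isSeparated (h : IsSparsestCut G cap dem (A ∪ B))
    (hAB : IsSeparated G (A : Set V) B) (hcap : ∀ u v, G.Adj u v → 0 ≤ cap u v)
    (hdem : ∀ u v, 0 ≤ dem u v) (hA : 0 < cutDem dem A) : IsSparsestCut G cap dem A := by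
  refine ⟨hA, fun T hT => le_trans ?_ (h.sparsity_le T hT)⟩
  set r := cutCap G cap (A ∪ B) / cutDem dem (A ∪ B) with hr
  have hr0 : 0 ≤ r := div_nonneg (cutCap_nonneg hcap _) h.cutDem_pos.le
  have hsum : cutCap G cap A + cutCap G cap B ≤ r * cutDem dem A + r * cutDem dem B := by
    calc cutCap G cap A + cutCap G cap B
        = r * cutDem dem (A ∪ B) := by
          rw [← cutCap_union_of_isSeparated cap hAB, hr, div_mul_cancel₀ _ h.cutDem_pos.ne']
      _ ≤ r * cutDem dem A + r * cutDem dem B := by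
          rw [← mul_add]
          exact mul_le_mul_of_nonneg_left (cutDem_union_le hdem A B) hr0
  rw [div_le_iff₀ hA]
  linarith [h.sparsity_mul_cutDem_le hcap hdem B]

theorem left_or_right_of_isSeparated (h : IsSparsestCut G cap dem (A ∪ B))
    (hAB : IsSeparated G (A : Set V) B) (hcap : ∀ u v, G.Adj u v → 0 ≤ cap u v)
    (hdem : ∀ u v, 0 ≤ dem u v) : IsSparsestCut G cap dem A ∨ IsSparsestCut G cap dem B := by
  have hpos : 0 < cutDem dem A ∨ 0 < cutDem dem B := by
    by_contra! ⟨hA, hB⟩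
    linarith [h.cutDem_pos, cutDem_union_le hdem A B]
  exact hpos.imp (h.left_of_isSeparated hAB hcap hdem)
    ((union_comm A B ▸ h).left_of_isSeparated hAB.symm hcap hdem)

theorem connected_of_minimal (h : Minimal (IsSparsestCut G cap dem) S)
    (hcap : ∀ u v, G.Adj u v → 0 ≤ cap u v) (hdem : ∀ u v, 0 ≤ dem u v) :
    (G.induce (S : Set V)).Connected := by
  refine connected_induce_iff_forall_isSeparated.2
    ⟨h.prop.nonempty, fun A B hAB hunion => ?_⟩
  lift A to Finset V using A.toFinite
  lift B to Finset V using B.toFinite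
  obtain rfl : A ∪ B = S := mod_cast hunion
  rcases h.prop.left_or_right_of_isSeparated hAB hcap hdem with hA | hB
  · have hsub : B ⊆ A := subset_union_right.trans (h.le_of_le hA subset_union_left)
    exact .inr (hAB.disjoint.eq_bot_of_ge hsub)
  · have hsub : A ⊆ B := subset_union_left.trans (h.le_of_le hB subset_union_right)
    exact .inl (hAB.disjoint.eq_bot_of_le hsub)

theorem connected_compl_of_maximal
    (h : Maximal (fun T => IsSparsestCut G cap dem T ∧ (G.induce (T : Set V)).Connected) S)
    (hG : G.Preconnected) (hcap : ∀ u v, G.Adj u v → 0 ≤ cap u v) (hdem : ∀ u v, 0 ≤ dem u v) :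
    (G.induce (S : Set V)ᶜ).Connected := by
  obtain ⟨hS, hSconn⟩ := h.prop
  have hSc : IsSparsestCut G (flip cap) (flip dem) Sᶜ := hS.flip_compl
  have right_eq_empty {A B : Finset V} (hAB : IsSeparated G (A : Set V) B) (hunion : A ∪ B = Sᶜ)
      (hA : IsSparsestCut G (flip cap) (flip dem) A) : B = ∅ := by
    have hAc : (G.induce ((Aᶜ : Finset V) : Set V)).Connected := by
      rw [coe_compl]
      exact hAB.connected_induce_compl hG hSconn (mod_cast hunion)
    have hle : Aᶜ ⊆ S := h.le_of_ge ⟨hA.flip_compl, hAc⟩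
      (le_compl_comm.1 (hunion ▸ subset_union_left))
    have hBA : B ⊆ A := (hunion ▸ subset_union_right : B ⊆ Sᶜ).trans (compl_le_of_compl_le hle)
    exact (disjoint_coe.1 hAB.disjoint).eq_bot_of_ge hBA
  rw [← coe_compl]
  refine connected_induce_iff_forall_isSeparated.2 ⟨hSc.nonempty, fun A B hAB hunion => ?_⟩
  lift A to Finset V using A.toFinite
  lift B to Finset V using B.toFinite
  replace hunion : A ∪ B = Sᶜ := mod_cast hunion
  simp only [coe_eq_empty]
  exact ((hunion ▸ hSc).left_or_right_of_isSeparated hAB (fun u v huv => hcap v u huv.symm)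
    fun u v => hdem v u).symm.imp (right_eq_empty hAB.symm (union_comm A B ▸ hunion))
    (right_eq_empty hAB hunion)

end IsSparsestCut

end SparsestCut

theorem stmt_8_general {V : Type*} [Fintype V] (G : SimpleGraph V) (hG : G.Preconnected)
    (cap dem : V → V → ℝ) (hcap0 : ∀ u v, G.Adj u v → 0 ≤ cap u v) (hdem0 : ∀ u v, 0 ≤ dem u v)
    (hpos : ∃ S : Finset V, 0 < cutDem dem S) :
    ∃ S : Finset V, IsSparsestCut G cap dem S ∧
      (G.induce (S : Set V)).Connected ∧ (G.induce (S : Set V)ᶜ).Connected := by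
  obtain ⟨T, hT⟩ := (Set.toFinite {T | IsSparsestCut G cap dem T}).exists_minimal
    (exists_isSparsestCut G cap hpos)
  obtain ⟨S, hS⟩ := (Set.toFinite {T | IsSparsestCut G cap dem T ∧
    (G.induce (T : Set V)).Connected}).exists_maximal
    ⟨T, hT.prop, IsSparsestCut.connected_of_minimal hT hcap0 hdem0⟩
  exact ⟨S, hS.prop.1, hS.prop.2,
    IsSparsestCut.connected_compl_of_maximal hS hG hcap0 hdem0⟩

/-- For any Sparsest Cut instance `(G, D)` in which the supply graph
`G` is connected and at least one cut separates positive demand, there exists a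
sparsest cut `(S, V∖S)` — a cut of minimum sparsity among cuts separating positive
demand — such that both induced subgraphs `G[S]` and `G[V∖S]` are connected. -/
theorem stmt_8 {V : Type*} [Fintype V] [DecidableEq V] (G : SimpleGraph V)
    (hG : G.Connected)
    (cap dem : V → V → ℝ)
    (hcapsymm : ∀ u v, cap u v = cap v u)
    (hcappos : ∀ u v, G.Adj u v → 0 < cap u v)
    (hdemsymm : ∀ u v, dem u v = dem v u)
    (hdem0 : ∀ u v, 0 ≤ dem u v)
    (hpos : ∃ S : Finset V, 0 < cutDem dem S) :
    ∃ S : Finset V, 0 < cutDem dem S ∧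
      (∀ S' : Finset V, 0 < cutDem dem S' →
        cutCap G cap S / cutDem dem S ≤ cutCap G cap S' / cutDem dem S') ∧
      (G.induce (S : Set V)).Connected ∧
      (G.induce (((Sᶜ : Finset V) : Set V))).Connected := by
  obtain ⟨S, ⟨hSpos, hSmin⟩, hS, hSc⟩ :=
    stmt_8_general G hG.preconnected cap dem (fun u v huv => (hcappos u v huv).le) hdem0 hpos
  exact ⟨S, hSpos, hSmin, hS, by rwa [coe_compl]⟩

end Stmt8
end

section
/- Let B = (U, V, E_B) be a bipartite Unique Label Cover instance with label set [d] in which every vertex of U ∪ V has degree Δ, and let H be the union-of-cliques instance derived from B. If some labeling of U ∪ V satisfies at least (1−δ)|E_B| of the constraints of B, then some labeling of V satisfies at least (1−2δ)|E_H| of the constraints of H. -/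
attribute [local instance] Classical.propDecidable

open Finset

/-!
Label `V` by the restriction of the given labeling. If `(u, v)` and `(u, w)` are both satisfied then
`σ_{uw} (σ_{uv}⁻¹ (label v)) = σ_{uw} (label u) = label w`, so a violated edge `(u, v, w)` of `H`
contains a violated edge of `B` in its first or its second position. When every vertex of `U` has
degree `Δ`, each edge of `B` occurs in each position exactly `Δ - 1` times, hence passing from `B`
to `H` at most doubles the fraction of violated edges.
-/

theorem one_sub_mul_card_le_card_filter_iff {α : Type*} (s : Finset α) (p : α → Prop)
    [DecidablePred p] (ε : ℝ) :
    (1 - ε) * (#s : ℝ) ≤ #{a ∈ s | p a} ↔ (#{a ∈ s | ¬ p a} : ℝ) ≤ ε * #s := by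
  have hsplit : (#{a ∈ s | p a} : ℝ) + #{a ∈ s | ¬ p a} = #s :=
    mod_cast card_filter_add_card_filter_not (s := s) p
  constructor <;> intro h <;> linarith

section UnionOfCliques

variable {U V : Type*} [Fintype U] [Fintype V]

/-- The edge set `E_B` of the bipartite graph on `U` and `V` with adjacency relation `B`. -/
noncomputable def bipartiteEdges (B : U → V → Prop) : Finset (U × V) :=
  {p | B p.1 p.2}

/-- The edges of the union-of-cliques multigraph `H` derived from `B`. An edge between `v` and `w`
arising from `u` is encoded by the two ordered triples `(u, v, w)` and `(u, w, v)`. -/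
noncomputable def cliqueEdges (B : U → V → Prop) : Finset (U × V × V) :=
  {t | B t.1 t.2.1 ∧ B t.1 t.2.2 ∧ t.2.1 ≠ t.2.2}

theorem mem_cliqueEdges {B : U → V → Prop} {u : U} {v w : V} :
    (u, v, w) ∈ cliqueEdges B ↔ B u v ∧ B u w ∧ v ≠ w := by
  simp [cliqueEdges]

theorem card_cliqueEdges_filter_fst_eq {B : U → V → Prop} {u : U} {v : V} (huv : B u v) :
    #{t ∈ cliqueEdges B | (t.1, t.2.1) = (u, v)} = #{w | B u w} - 1 := by
  have hfiber : {t ∈ cliqueEdges B | (t.1, t.2.1) = (u, v)} =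
      (({w | B u w} : Finset V).erase v).image fun w => (u, v, w) := by
    ext ⟨u', v', w⟩
    simp only [mem_filter, mem_cliqueEdges, mem_image, mem_erase, mem_univ, true_and, Prod.mk.injEq]
    grind
  have hinj : Function.Injective fun w : V => (u, v, w) :=
    (Prod.mk_right_injective u).comp (Prod.mk_right_injective v)
  rw [hfiber, card_image_of_injective _ hinj, card_erase_of_mem (by simpa using huv)]

theorem card_cliqueEdges_filter_fst {B : U → V → Prop} {Δ : ℕ}
    (hdeg : ∀ u, #{v | B u v} = Δ) (p : U × V → Prop) [DecidablePred p] :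
    #{t ∈ cliqueEdges B | p (t.1, t.2.1)} = #{e ∈ bipartiteEdges B | p e} * (Δ - 1) := by
  have hmaps : ∀ t ∈ {t ∈ cliqueEdges B | p (t.1, t.2.1)},
      (t.1, t.2.1) ∈ {e ∈ bipartiteEdges B | p e} := by
    simp +contextual [cliqueEdges, bipartiteEdges]
  rw [card_eq_sum_card_fiberwise hmaps]
  refine sum_const_nat fun ⟨u, v⟩ he => ?_
  obtain ⟨huv, hp⟩ : B u v ∧ p (u, v) := by simpa [bipartiteEdges] using he
  rw [← hdeg u, ← card_cliqueEdges_filter_fst_eq huv, filter_filter]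
  congr 1
  refine filter_congr fun t _ => and_iff_right_of_imp fun ht => ?_
  rwa [ht]

theorem card_cliqueEdges_filter_snd {B : U → V → Prop} {Δ : ℕ}
    (hdeg : ∀ u, #{v | B u v} = Δ) (p : U × V → Prop) [DecidablePred p] :
    #{t ∈ cliqueEdges B | p (t.1, t.2.2)} = #{e ∈ bipartiteEdges B | p e} * (Δ - 1) := by
  rw [← card_cliqueEdges_filter_fst hdeg p]
  refine card_equiv ((Equiv.refl U).prodCongr (Equiv.prodComm V V)) fun ⟨u, v, w⟩ => ?_
  simp only [mem_filter, mem_cliqueEdges, Equiv.prodCongr_apply, Equiv.coe_refl, Prod.map_apply,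
    id_eq, Equiv.prodComm_apply, Prod.swap_prod_mk]
  tauto

theorem card_cliqueEdges {B : U → V → Prop} {Δ : ℕ} (hdeg : ∀ u, #{v | B u v} = Δ) :
    #(cliqueEdges B) = #(bipartiteEdges B) * (Δ - 1) := by
  simpa using card_cliqueEdges_filter_fst hdeg fun _ => True

variable {α β : Type*} [DecidableEq β]

theorem card_violated_cliqueEdges_le {B : U → V → Prop} {Δ : ℕ} (hdeg : ∀ u, #{v | B u v} = Δ)
    (σ : U → V → α ≃ β) (f : U → α) (g : V → β) :
    #{t ∈ cliqueEdges B | σ t.1 t.2.2 ((σ t.1 t.2.1).symm (g t.2.1)) ≠ g t.2.2} ≤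
      2 * (#{e ∈ bipartiteEdges B | σ e.1 e.2 (f e.1) ≠ g e.2} * (Δ - 1)) := by
  let violated (e : U × V) : Prop := σ e.1 e.2 (f e.1) ≠ g e.2
  have hviolated : ∀ t : U × V × V, σ t.1 t.2.2 ((σ t.1 t.2.1).symm (g t.2.1)) ≠ g t.2.2 →
      violated (t.1, t.2.1) ∨ violated (t.1, t.2.2) := by
    rintro ⟨u, v, w⟩ hvw
    by_contra! hsat
    obtain ⟨huv, huw⟩ : σ u v (f u) = g v ∧ σ u w (f u) = g w := by simpa [violated] using hsat
    exact hvw (by rw [← huv, Equiv.symm_apply_apply, huw])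
  calc
    _ ≤ #{t ∈ cliqueEdges B | violated (t.1, t.2.1) ∨ violated (t.1, t.2.2)} :=
      card_le_card (monotone_filter_right _ fun t _ => hviolated t)
    _ ≤ #{t ∈ cliqueEdges B | violated (t.1, t.2.1)} +
        #{t ∈ cliqueEdges B | violated (t.1, t.2.2)} := by
      rw [filter_or]
      exact card_union_le _ _
    _ = 2 * (#{e ∈ bipartiteEdges B | violated e} * (Δ - 1)) := by
      rw [card_cliqueEdges_filter_fst hdeg violated, card_cliqueEdges_filter_snd hdeg violated,
        two_mul]

theorem stmt_11_general {B : U → V → Prop} {Δ : ℕ} (hdeg : ∀ u, #{v | B u v} = Δ)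
    (σ : U → V → α ≃ β) (f : U → α) (g : V → β) (δ : ℝ)
    (hsat : (1 - δ) * (#(bipartiteEdges B) : ℝ) ≤
      #{e ∈ bipartiteEdges B | σ e.1 e.2 (f e.1) = g e.2}) :
    (1 - 2 * δ) * (#(cliqueEdges B) : ℝ) ≤
      #{t ∈ cliqueEdges B | σ t.1 t.2.2 ((σ t.1 t.2.1).symm (g t.2.1)) = g t.2.2} := by
  rw [one_sub_mul_card_le_card_filter_iff] at hsat ⊢
  calc
    _ ≤ 2 * ((#{e ∈ bipartiteEdges B | σ e.1 e.2 (f e.1) ≠ g e.2} : ℝ) * (Δ - 1 : ℕ)) :=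
      mod_cast card_violated_cliqueEdges_le hdeg σ f g
    _ ≤ 2 * (δ * #(bipartiteEdges B) * (Δ - 1 : ℕ)) := by gcongr
    _ = 2 * δ * #(cliqueEdges B) := by
      rw [card_cliqueEdges hdeg]
      push_cast
      ring

end UnionOfCliques

/-- Let `B = (U, V, E_B)` be a bipartite Unique Label Cover instance
with label set `[d]` in which every vertex of `U ∪ V` has degree `Δ`, and let `H` be
the union-of-cliques instance derived from `B` (its edges are the pairs of distinct
neighbours `v, w` of a common `u ∈ U`, carrying the bijection `σ_{uw} ∘ σ_{uv}⁻¹`;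
here edges of `H` are counted as ordered triples `(u, v, w)`, counting each edge of the
multigraph `H` exactly twice).  If some labeling of `U ∪ V` satisfies at least
`(1−δ)|E_B|` of the constraints of `B`, then some labeling of `V` satisfies at least
`(1−2δ)|E_H|` of the constraints of `H`. -/
theorem stmt_11 {U V : Type*} [Fintype U] [Fintype V]
    (d Δ : ℕ) (hd : 0 < d) (B : U → V → Prop)
    (σ : U → V → Equiv.Perm (Fin d))
    (hdegU : ∀ u, (Finset.univ.filter fun v => B u v).card = Δ)
    (hdegV : ∀ v, (Finset.univ.filter fun u => B u v).card = Δ)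
    (δ : ℝ) (fU : U → Fin d) (fV : V → Fin d)
    (hsat : (1 - δ) * ((Finset.univ.filter fun p : U × V => B p.1 p.2).card : ℝ) ≤
      ((Finset.univ.filter fun p : U × V =>
          B p.1 p.2 ∧ σ p.1 p.2 (fU p.1) = fV p.2).card : ℝ)) :
    ∃ g : V → Fin d,
      (1 - 2 * δ) * ((Finset.univ.filter fun t : U × V × V =>
          B t.1 t.2.1 ∧ B t.1 t.2.2 ∧ t.2.1 ≠ t.2.2).card : ℝ) ≤
      ((Finset.univ.filter fun t : U × V × V =>
          B t.1 t.2.1 ∧ B t.1 t.2.2 ∧ t.2.1 ≠ t.2.2 ∧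
          σ t.1 t.2.2 ((σ t.1 t.2.1)⁻¹ (g t.2.1)) = g t.2.2).card : ℝ) := by
  have hH := stmt_11_general hdegU σ fU fV δ
    (by simpa only [bipartiteEdges, filter_filter] using hsat)
  exact ⟨fV, by simpa only [cliqueEdges, filter_filter, and_assoc, Equiv.Perm.inv_def] using hH⟩
end

section
/- If there exists a labeling f : V_H → [d] satisfying at least a (1−η) fraction of the constraints of the Δ-nice Unique Label Cover instance, then the gadget (G,D) has an admissible (s–t-separating) cut of capacity exactly 1 + α/2 that separates at least (1−η) units of demand. -/
attribute [local instance] Classical.propDecidable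

open Finset

namespace Stmt14

/-- The hypercube `{−1,1}^d`, encoded as `Fin d → Bool`. -/
abbrev Cube (d : ℕ) := Fin d → Bool

/-- Coordinatewise negation `x ↦ −x` of a cube point. -/
def negc {d : ℕ} (x : Cube d) : Cube d := fun i => !(x i)

/-- The action of a permutation `σ` of the coordinates on a cube point: `σ(x)` is the
vector whose `σ(i)`-th coordinate is `x_i`. -/
def permc {d : ℕ} (σ : Equiv.Perm (Fin d)) (x : Cube d) : Cube d := fun j => x (σ.symm j)

/-- Vertex set of the gadget: a hypercube `Q_v` for each vertex `v` of `H`, plus the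
two special vertices `s = inr false` and `t = inr true`. -/
abbrev W (VH : Type*) (d : ℕ) := (VH × Cube d) ⊕ Bool

/-- Supply-edge capacities of the gadget, where `N = n·2^d`:  a star edge of capacity
`1/N` from `s` (and from `t`) to every cube node, and hypercube edges of capacity
`α/N` inside each cube `Q_v`. -/
noncomputable def gcap (VH : Type*) [Fintype VH] (d : ℕ) (α : ℝ) :
    W VH d → W VH d → ℝ := fun u v =>
  match u, v with
  | Sum.inl _, Sum.inr _ => 1 / ((Fintype.card VH : ℝ) * 2 ^ d)
  | Sum.inr _, Sum.inl _ => 1 / ((Fintype.card VH : ℝ) * 2 ^ d)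
  | Sum.inl (w, x), Sum.inl (w', y) =>
      if w = w' ∧ (Finset.univ.filter fun i => x i ≠ y i).card = 1
      then α / ((Fintype.card VH : ℝ) * 2 ^ d) else 0
  | Sum.inr _, Sum.inr _ => 0

/-- Capacity of a cut `(S, W∖S)` of the gadget: total capacity of the supply edges
crossing it (each crossing pair counted once). -/
noncomputable def cutCap (VH : Type*) [Fintype VH] (d : ℕ) (α : ℝ)
    (S : Finset (W VH d)) : ℝ :=
  ∑ u ∈ S, ∑ v ∈ Sᶜ, gcap VH d α u v

/-- Demand separated by a cut `(S, W∖S)` of the gadget, where `M = m·2^d` and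
`m = |E_H| = n·Δ(Δ−1)/2`:  for each edge `(v,w)` of `H` (given by a clique `k` and an
ordered pair of distinct vertices `v, w ∈ C k`, which counts each edge of the
multigraph `H` twice, whence the weight `1/(2M)`) and each `x ∈ {−1,1}^d`, there is a
demand of `1/M` between `x ∈ Q_v` and `−σ_{vw}(x) ∈ Q_w`. -/
noncomputable def cutDem {VH K : Type*} [Fintype VH] [Fintype K] (d Δ : ℕ)
    (C : K → Finset VH) (σ : K → VH → VH → Equiv.Perm (Fin d))
    (S : Finset (W VH d)) : ℝ :=
  ∑ k : K, ∑ v ∈ C k, ∑ w ∈ (C k).erase v, ∑ x : Cube d,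
    if ((Sum.inl (v, x) : W VH d) ∈ S ↔
        (Sum.inl (w, negc (permc (σ k v w) x)) : W VH d) ∈ S)
    then 0
    else 1 / (2 * ((Fintype.card K : ℝ) * ((Δ : ℝ) * ((Δ : ℝ) - 1) / 2) * 2 ^ d))

/-!
The cut is the dictator cut: `s` together with the nodes `x ∈ Q_v` such that `x_{f(v)}` is the
value encoded by `true`. Every cube node loses exactly one of its two star edges, whatever the
`s`–`t` cut, so the star edges contribute `1`. Half of the cube nodes lie on the side of `s`, and
each of them has exactly one cube edge to the other side, the one in direction `f(v)`; these edges
contribute `α/2`. Since `σ_{vw}(x)` has `f(w)`-th coordinate `x_{f(v)}` whenever `f` satisfies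
`(v, w)`, the negation puts all demand pairs of a satisfied constraint on opposite sides.
-/

theorem card_ne_eq_one_iff_eq_update {ι : Type*} [Fintype ι] [DecidableEq ι] {β : ι → Type*}
    {x y : ∀ i, β i} [DecidablePred fun j ↦ x j ≠ y j] {i : ι} (hi : x i ≠ y i) :
    #{j | x j ≠ y j} = 1 ↔ y = Function.update x i (y i) := by
  have hmem : i ∈ ({j | x j ≠ y j} : Finset ι) := by simpa using hi
  calc #{j | x j ≠ y j} = 1
    _ ↔ ({j | x j ≠ y j} : Finset ι) = {i} :=
      ⟨fun h ↦ (eq_of_subset_of_card_le (singleton_subset_iff.2 hmem) (by simp [h])).symm,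
        fun h ↦ by simp [h]⟩
    _ ↔ ∀ j, j ≠ i → y j = x j := by
      simp only [eq_singleton_iff_unique_mem, hmem, true_and, mem_filter_univ]
      exact forall_congr' fun j ↦ by rw [not_imp_comm, eq_comm (a := x j)]
    _ ↔ y = Function.update x i (y i) := by simp [Function.eq_update_iff]

@[simp]
theorem negc_negc {d : ℕ} (x : Cube d) : negc (negc x) = x := by
  funext i
  simp [negc]

section Capacity

variable {V : Type*} [Fintype V] {d : ℕ}

theorem cutCap_disjSum_singleton_false [Nonempty V] (α : ℝ) (A : Finset (V × Cube d)) :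
    cutCap V d α (A.disjSum {false}) =
      1 + ∑ p ∈ A, ∑ q ∈ Aᶜ, gcap V d α (Sum.inl p) (Sum.inl q) := by
  have hcompl : (A.disjSum {false})ᶜ = Aᶜ.disjSum {true} := by ext (p | b) <;> simp
  have hcard : (#A : ℝ) + #Aᶜ = Fintype.card V * 2 ^ d := by
    exact_mod_cast (card_add_card_compl A).trans (by simp)
  have hstar : (#A : ℝ) * (1 / (Fintype.card V * 2 ^ d)) +
      #Aᶜ * (1 / (Fintype.card V * 2 ^ d)) = 1 := by
    rw [← add_mul, hcard]
    exact mul_one_div_cancel (by positivity)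
  simp only [cutCap, hcompl, sum_disjSum, sum_singleton, sum_add_distrib]
  simp only [gcap, sum_const, nsmul_eq_mul] at hstar ⊢
  linarith

/-- The cube nodes `x ∈ Q_v` whose coordinate `f v` is `true`: in each cube, the dictator
function of the label of `v`. -/
def dictator (f : V → Fin d) : Finset (V × Cube d) := {p | p.2 (f p.1) = true}

@[simp]
theorem mem_dictator {f : V → Fin d} {p : V × Cube d} :
    p ∈ dictator f ↔ p.2 (f p.1) = true := by
  simp [dictator]

theorem two_mul_card_dictator (f : V → Fin d) :
    2 * #(dictator f) = Fintype.card V * 2 ^ d := by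
  have hneg : #(dictator f) = #(dictator f)ᶜ :=
    card_nbij' (fun p ↦ (p.1, negc p.2)) (fun p ↦ (p.1, negc p.2))
      (fun p hp ↦ by simp_all [negc]) (fun p hp ↦ by simp_all [negc])
      (fun p _ ↦ by simp) (fun p _ ↦ by simp)
  calc 2 * #(dictator f) = #(dictator f) + #(dictator f)ᶜ := by rw [← hneg, two_mul]
    _ = Fintype.card V * 2 ^ d := by rw [card_add_card_compl]; simp

theorem sum_compl_dictator_gcap {f : V → Fin d} (α : ℝ) {p : V × Cube d} (hp : p ∈ dictator f) :
    ∑ q ∈ (dictator f)ᶜ, gcap V d α (Sum.inl p) (Sum.inl q) = α / (Fintype.card V * 2 ^ d) := by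
  obtain ⟨v, x⟩ := p
  have hx : x (f v) = true := by simpa using hp
  have hadj {w : V} {y : Cube d} (hq : (w, y) ∈ (dictator f)ᶜ) :
      (v = w ∧ #{i | x i ≠ y i} = 1) ↔ (w, y) = (v, Function.update x (f v) false) := by
    rw [Prod.mk.injEq, eq_comm (a := v)]
    refine and_congr_right fun hwv ↦ ?_
    subst hwv
    have hy : y (f w) = false := by simpa using hq
    rw [card_ne_eq_one_iff_eq_update (i := f w) (by simp [hx, hy]), hy]
  calc ∑ q ∈ (dictator f)ᶜ, gcap V d α (Sum.inl (v, x)) (Sum.inl q)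
    _ = ∑ q ∈ (dictator f)ᶜ, if q = (v, Function.update x (f v) false) then
          α / (Fintype.card V * 2 ^ d) else 0 :=
      sum_congr rfl fun _ hq ↦ if_congr (hadj hq) rfl rfl
    _ = α / (Fintype.card V * 2 ^ d) := by rw [sum_ite_eq', if_pos (by simp)]

/-- The admissible cut of the gadget induced by a labeling: the side of `s` consists of `s` and
the dictator half of each cube. -/
def dictatorCut (f : V → Fin d) : Finset (W V d) := (dictator f).disjSum {false}

theorem cutCap_dictatorCut [Nonempty V] (α : ℝ) (f : V → Fin d) :
    cutCap V d α (dictatorCut f) = 1 + α / 2 := by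
  have hhalf : 2 * (#(dictator f) : ℝ) = Fintype.card V * 2 ^ d := by
    exact_mod_cast two_mul_card_dictator f
  have hN : (Fintype.card V * 2 ^ d : ℝ) ≠ 0 := by positivity
  rw [dictatorCut, cutCap_disjSum_singleton_false,
    sum_congr rfl fun p hp ↦ sum_compl_dictator_gcap α hp, sum_const, nsmul_eq_mul]
  rw [← hhalf] at hN ⊢
  have hA : (#(dictator f) : ℝ) ≠ 0 := right_ne_zero_of_mul hN
  field_simp

end Capacity

section Demand

variable {V K : Type*} [Fintype V] {d : ℕ}

theorem negc_permc_mem_dictator_iff {f : V → Fin d} {v w : V} {τ : Equiv.Perm (Fin d)}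
    (hτ : τ (f v) = f w) (x : Cube d) :
    (w, negc (permc τ x)) ∈ dictator f ↔ (v, x) ∉ dictator f := by
  simp [negc, permc, ← hτ]

theorem le_sum_demand_dictatorCut (f : V → Fin d) (v w : V) (τ : Equiv.Perm (Fin d)) {c : ℝ}
    (hc : 0 ≤ c) :
    (if τ (f v) = f w then 2 ^ d * c else 0) ≤
      ∑ x : Cube d, if ((Sum.inl (v, x) : W V d) ∈ dictatorCut f ↔
        (Sum.inl (w, negc (permc τ x)) : W V d) ∈ dictatorCut f) then 0 else c := by
  split_ifs with hτ
  · simp [dictatorCut, inl_mem_disjSum, negc_permc_mem_dictator_iff hτ, -mem_dictator]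
  · exact sum_nonneg fun x _ ↦ by split_ifs <;> simp [hc]

theorem sum_satisfied_div_le_cutDem_dictatorCut [DecidableEq V] [Fintype K] (Δ : ℕ)
    (C : K → Finset V) (σ : K → V → V → Equiv.Perm (Fin d)) (f : V → Fin d) :
    (∑ k, ∑ v ∈ C k, ∑ w ∈ (C k).erase v, if σ k v w (f v) = f w then (1 : ℝ) else 0) /
        (Fintype.card K * (Δ * (Δ - 1))) ≤ cutDem d Δ C σ (dictatorCut f) := by
  have hpairs : (0 : ℝ) ≤ Δ * (Δ - 1) := by
    cases Δ
    · simp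
    · rw [Nat.cast_succ, add_sub_cancel_right]
      positivity
  have hweight : 1 / (Fintype.card K * (Δ * (Δ - 1)) : ℝ) =
      2 ^ d * (1 / (2 * (Fintype.card K * (Δ * (Δ - 1) / 2) * 2 ^ d))) := by
    field_simp
  -- `cutDem` erases with the classical instance
  have hinst : ‹DecidableEq V› = fun v w ↦ Classical.propDecidable (v = w) := Subsingleton.elim _ _
  subst hinst
  simp only [cutDem, sum_div, ite_div, zero_div]
  gcongr with k _ v _ w _
  rw [hweight]
  exact le_sum_demand_dictatorCut f v w (σ k v w) (by positivity)

end Demand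

theorem sum_card_erase_eq {V K : Type*} [DecidableEq V] [Fintype K] {Δ : ℕ}
    {C : K → Finset V} (hC : ∀ k, #(C k) = Δ) :
    ∑ k, ∑ v ∈ C k, (#((C k).erase v) : ℝ) = Fintype.card K * (Δ * (Δ - 1)) := by
  have hclique (k : K) : ∑ v ∈ C k, (#((C k).erase v) : ℝ) = Δ * (Δ - 1) := by
    rw [sum_congr rfl fun v hv ↦ cast_card_erase_of_mem hv, sum_const, hC, nsmul_eq_mul]
  simp only [hclique, sum_const, card_univ, nsmul_eq_mul]

theorem stmt_14_general {V K : Type*} [Fintype V] [Nonempty V] [DecidableEq V] [Fintype K]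
    [Nonempty K] {d Δ : ℕ} (hΔ : 2 ≤ Δ) (C : K → Finset V) (hC : ∀ k, #(C k) = Δ)
    (σ : K → V → V → Equiv.Perm (Fin d)) (α η : ℝ) (f : V → Fin d)
    (hsat : (1 - η) * ∑ k, ∑ v ∈ C k, (#((C k).erase v) : ℝ) ≤
      ∑ k, ∑ v ∈ C k, ∑ w ∈ (C k).erase v, if σ k v w (f v) = f w then (1 : ℝ) else 0) :
    ∃ S : Finset (W V d),
      ((Sum.inr false : W V d) ∈ S ↔ (Sum.inr true : W V d) ∉ S) ∧
      cutCap V d α S = 1 + α / 2 ∧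
      1 - η ≤ cutDem d Δ C σ S := by
  have hΔ' : (1 : ℝ) < Δ := by exact_mod_cast hΔ
  have hpos : (0 : ℝ) < Fintype.card K * (Δ * (Δ - 1)) := by
    have := sub_pos.2 hΔ'
    positivity
  rw [sum_card_erase_eq hC, ← le_div_iff₀ hpos] at hsat
  exact ⟨dictatorCut f, by simp [dictatorCut], cutCap_dictatorCut α f,
    hsat.trans (sum_satisfied_div_le_cutDem_dictatorCut Δ C σ f)⟩

/-- If there exists a labeling `f : V_H → [d]` satisfying at least a
`(1−η)` fraction of the constraints of the `Δ`-nice Unique Label Cover instance (here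
the satisfied constraints are counted over ordered pairs, out of the
`n·Δ(Δ−1) = 2m` ordered constraints), then the gadget `(G,D)` has an admissible
(`s`–`t`-separating) cut of capacity exactly `1 + α/2` that separates at least
`(1−η)` units of demand. -/
theorem stmt_14 {VH K : Type*} [Fintype VH] [DecidableEq VH] [Fintype K]
    (d Δ : ℕ) (hd : 0 < d) (hΔ : 2 ≤ Δ) (hn : 0 < Fintype.card VH)
    (hK : Fintype.card K = Fintype.card VH)
    (C : K → Finset VH) (hCsize : ∀ k, (C k).card = Δ)
    (hCmem : ∀ v : VH, (Finset.univ.filter fun k => v ∈ C k).card = Δ)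
    (σ : K → VH → VH → Equiv.Perm (Fin d))
    (hσ : ∀ k v w, σ k w v = (σ k v w)⁻¹)
    (α : ℝ) (hα : 0 < α) (η : ℝ)
    (f : VH → Fin d)
    (hsat : (1 - η) * ((Fintype.card K : ℝ) * ((Δ : ℝ) * ((Δ : ℝ) - 1))) ≤
        ∑ k : K, ∑ v ∈ C k, ∑ w ∈ (C k).erase v,
          (if σ k v w (f v) = f w then (1 : ℝ) else 0)) :
    ∃ S : Finset (W VH d),
      ((Sum.inr false : W VH d) ∈ S ↔ (Sum.inr true : W VH d) ∉ S) ∧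
      cutCap VH d α S = 1 + α / 2 ∧
      1 - η ≤ cutDem d Δ C σ S := by
  have : Nonempty VH := Fintype.card_pos_iff.1 hn
  have : Nonempty K := Fintype.card_pos_iff.1 (hK ▸ hn)
  exact stmt_14_general hΔ C hCsize σ α η f (by rwa [sum_card_erase_eq hCsize])

end Stmt14
end

section
/- Fix ε > 0 and let α = ε² in the gadget. Call a vertex v ∈ V_H bad for a cut (A,Ā) if more than (32/(αε))·2^{d−1} hypercube edges of Q_v cross the cut. Then any cut (A,Ā) of the gadget whose sparsity is at most 2 has at most (ε/8)·n bad vertices. -/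
attribute [local instance] Classical.propDecidable

open Finset

namespace Stmt15

/-- The hypercube `{−1,1}^d`, encoded as `Fin d → Bool`. -/
abbrev Cube (d : ℕ) := Fin d → Bool

/-- Coordinatewise negation `x ↦ −x` of a cube point. -/
def negc {d : ℕ} (x : Cube d) : Cube d := fun i => !(x i)

/-- The action of a permutation `σ` of the coordinates on a cube point: `σ(x)` is the
vector whose `σ(i)`-th coordinate is `x_i`. -/
def permc {d : ℕ} (σ : Equiv.Perm (Fin d)) (x : Cube d) : Cube d := fun j => x (σ.symm j)

/-- Vertex set of the gadget: a hypercube `Q_v` for each vertex `v` of `H`, plus the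
two special vertices `s = inr false` and `t = inr true`. -/
abbrev W (VH : Type*) (d : ℕ) := (VH × Cube d) ⊕ Bool

/-- Supply-edge capacities of the gadget, where `N = n·2^d`:  a star edge of capacity
`1/N` from `s` (and from `t`) to every cube node, and hypercube edges of capacity
`α/N` inside each cube `Q_v`. -/
noncomputable def gcap (VH : Type*) [Fintype VH] (d : ℕ) (α : ℝ) :
    W VH d → W VH d → ℝ := fun u v =>
  match u, v with
  | Sum.inl _, Sum.inr _ => 1 / ((Fintype.card VH : ℝ) * 2 ^ d)
  | Sum.inr _, Sum.inl _ => 1 / ((Fintype.card VH : ℝ) * 2 ^ d)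
  | Sum.inl (w, x), Sum.inl (w', y) =>
      if w = w' ∧ (Finset.univ.filter fun i => x i ≠ y i).card = 1
      then α / ((Fintype.card VH : ℝ) * 2 ^ d) else 0
  | Sum.inr _, Sum.inr _ => 0

/-- Capacity of a cut `(S, W∖S)` of the gadget: total capacity of the supply edges
crossing it (each crossing pair counted once). -/
noncomputable def cutCap (VH : Type*) [Fintype VH] (d : ℕ) (α : ℝ)
    (S : Finset (W VH d)) : ℝ :=
  ∑ u ∈ S, ∑ v ∈ Sᶜ, gcap VH d α u v

/-- Demand separated by a cut `(S, W∖S)` of the gadget, where `M = m·2^d` and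
`m = |E_H| = n·Δ(Δ−1)/2`:  for each edge `(v,w)` of `H` (given by a clique `k` and an
ordered pair of distinct vertices `v, w ∈ C k`, which counts each edge of the
multigraph `H` twice, whence the weight `1/(2M)`) and each `x ∈ {−1,1}^d`, there is a
demand of `1/M` between `x ∈ Q_v` and `−σ_{vw}(x) ∈ Q_w`. -/
noncomputable def cutDem {VH K : Type*} [Fintype VH] [Fintype K] (d Δ : ℕ)
    (C : K → Finset VH) (σ : K → VH → VH → Equiv.Perm (Fin d))
    (S : Finset (W VH d)) : ℝ :=
  ∑ k : K, ∑ v ∈ C k, ∑ w ∈ (C k).erase v, ∑ x : Cube d,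
    if ((Sum.inl (v, x) : W VH d) ∈ S ↔
        (Sum.inl (w, negc (permc (σ k v w) x)) : W VH d) ∈ S)
    then 0
    else 1 / (2 * ((Fintype.card K : ℝ) * ((Δ : ℝ) * ((Δ : ℝ) - 1) / 2) * 2 ^ d))


/-- Number of hypercube edges of the cube `Q_v` crossing the cut `(A, W∖A)`. -/
noncomputable def cubeCut {VH : Type*} [Fintype VH] (d : ℕ) (v : VH)
    (A : Finset (W VH d)) : ℕ :=
  ∑ x : Cube d, ∑ y : Cube d,
    if (Sum.inl (v, x) : W VH d) ∈ A ∧ (Sum.inl (v, y) : W VH d) ∉ A ∧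
       (Finset.univ.filter fun i => x i ≠ y i).card = 1
    then 1 else 0

/-!
Each hypercube edge has capacity `α/N`, so a cut crossing `X` hypercube edges in total has
capacity at least `α X / N`. On the other hand the total demand is `1`, so a cut of sparsity at
most `2` has capacity at most `2`, and hence `X ≤ 2N/α`. Every bad vertex contributes more than
`(32/(αε))·2^(d-1)` to `X`, and Markov's inequality leaves at most `(ε/8)·n` of them.
-/

theorem card_filter_lt_nsmul_le_sum {ι M : Type*} [AddCommMonoid M] [PartialOrder M]
    [IsOrderedAddMonoid M] (s : Finset ι) (f : ι → M) (hf : ∀ i ∈ s, 0 ≤ f i) (c : M) :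
    #{i ∈ s | c < f i} • c ≤ ∑ i ∈ s, f i :=
  calc #{i ∈ s | c < f i} • c ≤ ∑ i ∈ s with c < f i, f i :=
        card_nsmul_le_sum _ _ _ fun _ hi => (mem_filter.mp hi).2.le
    _ ≤ ∑ i ∈ s, f i :=
        sum_le_sum_of_subset_of_nonneg (filter_subset _ _) fun i hi _ => hf i hi

section Capacity

variable {VH : Type*} [Fintype VH] {d : ℕ}

theorem sum_cubeCut_eq (A : Finset (W VH d)) :
    ∑ v, cubeCut d v A =
      ∑ p ∈ A.toLeft, ∑ q ∈ Aᶜ.toLeft,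
        if p.1 = q.1 ∧ #{i | p.2 i ≠ q.2 i} = 1 then 1 else 0 := by
  have hA : A.toLeft = ({p | .inl p ∈ A} : Finset (VH × Cube d)) := by ext; simp
  have hAc : Aᶜ.toLeft = ({p | .inl p ∉ A} : Finset (VH × Cube d)) := by ext; simp
  simp only [cubeCut, hA, hAc, sum_filter, Fintype.sum_prod_type]
  refine sum_congr rfl fun v _ => sum_congr rfl fun x _ => ?_
  by_cases hx : (.inl (v, x) : W VH d) ∈ A
  · rw [if_pos hx, Fintype.sum_eq_single v]
    · simp [hx, ite_and]
    · intro w hw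
      simp [hw.symm]
  · simp [hx]

theorem cutCap_eq (α : ℝ) (A : Finset (W VH d)) :
    cutCap VH d α A =
      (#A.toLeft * #Aᶜ.toRight + #A.toRight * #Aᶜ.toLeft + α * ∑ v, (cubeCut d v A : ℝ)) /
        (Fintype.card VH * 2 ^ d) := by
  have cube_edges : (∑ v, (cubeCut d v A : ℝ)) * (α / (Fintype.card VH * 2 ^ d)) =
      ∑ p ∈ A.toLeft, ∑ q ∈ Aᶜ.toLeft, gcap VH d α (.inl p) (.inl q) := by
    rw [← Nat.cast_sum, sum_cubeCut_eq]
    simp only [gcap, Nat.cast_sum, Nat.cast_ite, Nat.cast_one, Nat.cast_zero, sum_mul, ite_mul,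
      one_mul, zero_mul]
  simp only [cutCap, sum_sum_eq_sum_toLeft_add_sum_toRight, sum_add_distrib, ← cube_edges]
  simp only [gcap, sum_const, nsmul_eq_mul]
  ring

theorem mul_sum_cubeCut_le (α : ℝ) (A : Finset (W VH d)) :
    α * ∑ v, (cubeCut d v A : ℝ) ≤ cutCap VH d α A * (Fintype.card VH * 2 ^ d) := by
  cases isEmpty_or_nonempty VH
  · simp
  · rw [cutCap_eq, div_mul_cancel₀ _ (by positivity)]
    exact le_add_of_nonneg_left (by positivity)

theorem mul_card_filter_lt_cubeCut_mul_le {α : ℝ} (hα : 0 ≤ α) (A : Finset (W VH d)) (T : ℝ) :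
    α * (#{v : VH | T < cubeCut d v A} * T) ≤
      cutCap VH d α A * (Fintype.card VH * 2 ^ d) := by
  have markov := card_filter_lt_nsmul_le_sum univ (fun v : VH => (cubeCut d v A : ℝ))
    (fun _ _ => Nat.cast_nonneg _) T
  rw [nsmul_eq_mul] at markov
  exact (mul_le_mul_of_nonneg_left markov hα).trans (mul_sum_cubeCut_le α A)

end Capacity

theorem cutDem_le_one {VH K : Type*} [Fintype VH] [Fintype K] {d Δ : ℕ} {C : K → Finset VH}
    (hC : ∀ k, #(C k) = Δ) (σ : K → VH → VH → Equiv.Perm (Fin d)) (A : Finset (W VH d)) :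
    cutDem d Δ C σ A ≤ 1 := by
  set M : ℝ := Fintype.card K * (Δ * (Δ - 1) / 2) * 2 ^ d with hM
  have hM_nonneg : 0 ≤ M := by
    rw [hM, ← Nat.cast_choose_two]
    positivity
  calc cutDem d Δ C σ A
      ≤ ∑ k, ∑ v ∈ C k, ∑ w ∈ (C k).erase v, ∑ _x : Cube d, 1 / (2 * M) := by
        unfold cutDem
        gcongr
        split_ifs
        exacts [by positivity, le_rfl]
    _ = ∑ k, ∑ _v ∈ C k, (Δ - 1) * (2 ^ d * (1 / (2 * M))) :=
        sum_congr rfl fun k _ => sum_congr rfl fun v hv => by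
          simp [cast_card_erase_of_mem hv, hC]
    _ = 2 * M * (1 / (2 * M)) := by
        simp only [sum_const, hC, card_univ, nsmul_eq_mul, hM]
        ring
    _ ≤ 1 := by simpa only [one_div] using mul_inv_le_one

theorem stmt_15_general {VH K : Type*} [Fintype VH] [Fintype K]
    {d Δ : ℕ} (hd : 0 < d)
    {C : K → Finset VH} (hCsize : ∀ k, #(C k) = Δ)
    {σ : K → VH → VH → Equiv.Perm (Fin d)}
    {ε α : ℝ} (hε : 0 < ε) (hα : 0 < α)
    {A : Finset (W VH d)}
    (hdem : 0 < cutDem d Δ C σ A)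
    (hsp : cutCap VH d α A / cutDem d Δ C σ A ≤ 2) :
    (#{v : VH | 32 / (α * ε) * (2 : ℝ) ^ (d - 1) < cubeCut d v A} : ℝ)
      ≤ ε / 8 * Fintype.card VH := by
  have cap_le_two : cutCap VH d α A ≤ 2 := by
    linarith [(div_le_iff₀ hdem).mp hsp, cutDem_le_one hCsize σ A]
  have bad_le := (mul_card_filter_lt_cubeCut_mul_le hα.le A (32 / (α * ε) * 2 ^ (d - 1))).trans
    (mul_le_mul_of_nonneg_right cap_le_two (by positivity))
  rw [← mul_pow_sub_one hd.ne' (2 : ℝ)] at bad_le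
  field_simp at bad_le ⊢
  linarith

/-- Fix `ε > 0` and let `α = ε²` in the gadget.  Call a vertex
`v ∈ V_H` bad for a cut `(A, Ā)` if more than `(32/(αε))·2^{d−1}` hypercube edges of
`Q_v` cross the cut.  Then any cut `(A, Ā)` of the gadget whose sparsity is (defined
and) at most `2` has at most `(ε/8)·n` bad vertices. -/
theorem stmt_15 {VH K : Type*} [Fintype VH] [DecidableEq VH] [Fintype K]
    (d Δ : ℕ) (hd : 0 < d) (hΔ : 2 ≤ Δ) (hn : 0 < Fintype.card VH)
    (hK : Fintype.card K = Fintype.card VH)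
    (C : K → Finset VH) (hCsize : ∀ k, (C k).card = Δ)
    (hCmem : ∀ v : VH, (Finset.univ.filter fun k => v ∈ C k).card = Δ)
    (σ : K → VH → VH → Equiv.Perm (Fin d))
    (hσ : ∀ k v w, σ k w v = (σ k v w)⁻¹)
    (ε α : ℝ) (hε : 0 < ε) (hαdef : α = ε ^ 2)
    (A : Finset (W VH d))
    (hdem : 0 < cutDem d Δ C σ A)
    (hsp : cutCap VH d α A / cutDem d Δ C σ A ≤ 2) :
    ((Finset.univ.filter fun v : VH =>
        (32 / (α * ε)) * (2 : ℝ) ^ (d - 1) < (cubeCut d v A : ℝ)).card : ℝ)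
      ≤ ε / 8 * (Fintype.card VH : ℝ) := by
  exact stmt_15_general hd hCsize hε (hαdef ▸ pow_pos hε 2) hdem hsp

end Stmt15
end

section
/- In the gadget (G,D), every inadmissible cut (A,Ā) — i.e., every cut that does not separate s from t — satisfies dem(A,Ā) ≤ cap(A,Ā): the total demand it separates is at most the total capacity it cuts. -/
attribute [local instance] Classical.propDecidable

open Finset

namespace Stmt16

/-- The hypercube `{−1,1}^d`, encoded as `Fin d → Bool`. -/
abbrev Cube (d : ℕ) := Fin d → Bool

/-- Coordinatewise negation `x ↦ −x` of a cube point. -/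
def negc {d : ℕ} (x : Cube d) : Cube d := fun i => !(x i)

/-- The action of a permutation `σ` of the coordinates on a cube point: `σ(x)` is the
vector whose `σ(i)`-th coordinate is `x_i`. -/
def permc {d : ℕ} (σ : Equiv.Perm (Fin d)) (x : Cube d) : Cube d := fun j => x (σ.symm j)

/-- Vertex set of the gadget: a hypercube `Q_v` for each vertex `v` of `H`, plus the
two special vertices `s = inr false` and `t = inr true`. -/
abbrev W (VH : Type*) (d : ℕ) := (VH × Cube d) ⊕ Bool

/-- Supply-edge capacities of the gadget, where `N = n·2^d`:  a star edge of capacity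
`1/N` from `s` (and from `t`) to every cube node, and hypercube edges of capacity
`α/N` inside each cube `Q_v`. -/
noncomputable def gcap (VH : Type*) [Fintype VH] (d : ℕ) (α : ℝ) :
    W VH d → W VH d → ℝ := fun u v =>
  match u, v with
  | Sum.inl _, Sum.inr _ => 1 / ((Fintype.card VH : ℝ) * 2 ^ d)
  | Sum.inr _, Sum.inl _ => 1 / ((Fintype.card VH : ℝ) * 2 ^ d)
  | Sum.inl (w, x), Sum.inl (w', y) =>
      if w = w' ∧ (Finset.univ.filter fun i => x i ≠ y i).card = 1
      then α / ((Fintype.card VH : ℝ) * 2 ^ d) else 0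
  | Sum.inr _, Sum.inr _ => 0

/-- Capacity of a cut `(S, W∖S)` of the gadget: total capacity of the supply edges
crossing it (each crossing pair counted once). -/
noncomputable def cutCap (VH : Type*) [Fintype VH] (d : ℕ) (α : ℝ)
    (S : Finset (W VH d)) : ℝ :=
  ∑ u ∈ S, ∑ v ∈ Sᶜ, gcap VH d α u v

/-- Demand separated by a cut `(S, W∖S)` of the gadget, where `M = m·2^d` and
`m = |E_H| = n·Δ(Δ−1)/2`:  for each edge `(v,w)` of `H` (given by a clique `k` and an
ordered pair of distinct vertices `v, w ∈ C k`, which counts each edge of the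
multigraph `H` twice, whence the weight `1/(2M)`) and each `x ∈ {−1,1}^d`, there is a
demand of `1/M` between `x ∈ Q_v` and `−σ_{vw}(x) ∈ Q_w`. -/
noncomputable def cutDem {VH K : Type*} [Fintype VH] [Fintype K] (d Δ : ℕ)
    (C : K → Finset VH) (σ : K → VH → VH → Equiv.Perm (Fin d))
    (S : Finset (W VH d)) : ℝ :=
  ∑ k : K, ∑ v ∈ C k, ∑ w ∈ (C k).erase v, ∑ x : Cube d,
    if ((Sum.inl (v, x) : W VH d) ∈ S ↔
        (Sum.inl (w, negc (permc (σ k v w) x)) : W VH d) ∈ S)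
    then 0
    else 1 / (2 * ((Fintype.card K : ℝ) * ((Δ : ℝ) * ((Δ : ℝ) - 1) / 2) * 2 ^ d))


/-! Passing to the complement if necessary, neither `s` nor `t` lies in `A`. Let `L` be the set of
cube nodes in `A`. The star edges already contribute `2|L|/N` to the capacity of the cut, and every
demand edge it separates has an endpoint in `L`. Each `v` lies in `Δ` cliques with `Δ - 1` further
vertices and each `x ↦ -σ_{vw}(x)` is a bijection, so a cube node carries demand
`Δ(Δ - 1)/M = 2/N`, and the separated demand is at most `2|L|/N`. -/

theorem toRight_compl {ι κ : Type*} [Fintype ι] [Fintype κ] [DecidableEq (ι ⊕ κ)] [DecidableEq κ]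
    (s : Finset (ι ⊕ κ)) : sᶜ.toRight = s.toRightᶜ := by
  ext
  simp

section DoubleCounting

variable {ι κ : Type*}

theorem sum_sum_erase_add [DecidableEq ι] {M : Type*} [AddCommMonoid M] (s : Finset ι)
    (f : ι → M) :
    ∑ v ∈ s, ∑ w ∈ s.erase v, (f v + f w) = (2 * (#s - 1)) • ∑ v ∈ s, f v := by
  have sum_left : ∑ v ∈ s, ∑ _w ∈ s.erase v, f v = (#s - 1) • ∑ v ∈ s, f v := by
    rw [smul_sum]
    exact sum_congr rfl fun v hv => by rw [sum_const, card_erase_of_mem hv]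
  have sum_right : ∑ v ∈ s, ∑ w ∈ s.erase v, f w = ∑ w ∈ s, ∑ _v ∈ s.erase w, f w :=
    sum_comm' fun v w => by grind
  simp only [sum_add_distrib]
  rw [sum_right, sum_left, two_mul, add_nsmul]

theorem sum_sum_mem_eq_sum_card_nsmul [Fintype ι] [Fintype κ] {M : Type*} [AddCommMonoid M]
    (C : κ → Finset ι) (f : ι → M) :
    ∑ k, ∑ v ∈ C k, f v = ∑ v, #{k | v ∈ C k} • f v := by
  simp only [← sum_const]
  exact sum_comm' fun k v => by simp

/-- The fiber over `v` of a finite set of pairs; for a set of cube nodes, its part lying in `Q_v`,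
read as a subset of the hypercube. -/
noncomputable def fiber [Fintype κ] (L : Finset (ι × κ)) (v : ι) : Finset κ := {x | (v, x) ∈ L}

theorem mem_fiber [Fintype κ] {L : Finset (ι × κ)} {v : ι} {x : κ} :
    x ∈ fiber L v ↔ (v, x) ∈ L := by
  simp [fiber]

theorem sum_card_fiber [Fintype ι] [Fintype κ] (L : Finset (ι × κ)) : ∑ v, #(fiber L v) = #L := by
  simp only [fiber, card_filter]
  rw [← Fintype.sum_prod_type' fun v x => if (v, x) ∈ L then 1 else 0]
  simp

theorem card_filter_not_mem_iff_mem_le_add [Fintype ι] {π : ι → κ} (hπ : π.Injective)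
    (P : Finset ι) (Q : Finset κ) : #{x | ¬(x ∈ P ↔ π x ∈ Q)} ≤ #P + #Q :=
  calc #{x | ¬(x ∈ P ↔ π x ∈ Q)}
      ≤ #(P ∪ ({x | π x ∈ Q} : Finset ι)) := card_le_card fun x => by grind
    _ ≤ #P + #{x | π x ∈ Q} := card_union_le ..
    _ ≤ #P + #Q :=
      Nat.add_le_add_left (card_le_card_of_injOn π (fun x hx => (mem_filter.mp hx).2) hπ.injOn) _

end DoubleCounting

section Capacity

variable {VH : Type*} [Fintype VH] {d : ℕ} {α : ℝ}

theorem gcap_nonneg (hα : 0 ≤ α) (u v : W VH d) : 0 ≤ gcap VH d α u v := by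
  rcases u with ⟨w, x⟩ | b <;> rcases v with ⟨w', y⟩ | b' <;> simp only [gcap] <;> positivity

theorem starCap_le_cutCap (hα : 0 ≤ α) (A : Finset (W VH d)) :
    ((#A.toLeft * #Aᶜ.toRight + #A.toRight * #Aᶜ.toLeft : ℕ) : ℝ)
      / (Fintype.card VH * 2 ^ d) ≤ cutCap VH d α A := by
  have cube_nonneg : 0 ≤ ∑ p ∈ A.toLeft, ∑ q ∈ Aᶜ.toLeft, gcap VH d α (.inl p) (.inl q) :=
    sum_nonneg fun _ _ => sum_nonneg fun _ _ => gcap_nonneg hα _ _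
  have cutCap_eq : cutCap VH d α A =
      ∑ p ∈ A.toLeft, ∑ q ∈ Aᶜ.toLeft, gcap VH d α (.inl p) (.inl q) +
        ((#A.toLeft * #Aᶜ.toRight + #A.toRight * #Aᶜ.toLeft : ℕ) : ℝ)
          / (Fintype.card VH * 2 ^ d) := by
    simp only [cutCap, sum_sum_eq_sum_toLeft_add_sum_toRight, sum_add_distrib]
    simp only [gcap, sum_const, nsmul_eq_mul, mul_zero]
    push_cast
    ring
  linarith

theorem two_mul_card_toLeft_div_le_cutCap (hα : 0 ≤ α) {A : Finset (W VH d)}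
    (hA : A.toRight = ∅) :
    (2 * #A.toLeft : ℕ) / (Fintype.card VH * 2 ^ d) ≤ cutCap VH d α A := by
  have compl_toRight : Aᶜ.toRight = univ := by rw [toRight_compl, hA, compl_empty]
  have card_toRight_compl : #Aᶜ.toRight = 2 := by rw [compl_toRight, card_univ, Fintype.card_bool]
  have star_le := starCap_le_cutCap hα A
  rwa [hA, card_toRight_compl, card_empty, zero_mul, add_zero, mul_comm _ 2] at star_le

theorem gcap_comm (u v : W VH d) : gcap VH d α u v = gcap VH d α v u := by
  rcases u with ⟨w, x⟩ | _ <;> rcases v with ⟨w', y⟩ | _ <;> simp only [gcap]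
  simp only [eq_comm (a := w), ne_comm (a := x _)]

theorem cutCap_compl (A : Finset (W VH d)) : cutCap VH d α Aᶜ = cutCap VH d α A := by
  simp only [cutCap, compl_compl]
  rw [sum_comm]
  exact sum_congr rfl fun u _ => sum_congr rfl fun v _ => gcap_comm v u

end Capacity

section Demand

variable {VH K : Type*} [Fintype K] {d Δ : ℕ}

theorem negc_permc_injective (τ : Equiv.Perm (Fin d)) :
    Function.Injective fun x : Cube d => negc (permc τ x) := fun x y h => by
  funext i
  simpa [negc, permc] using congrFun h (τ i)

/-- The number of demand edges crossing the cut `(S, W∖S)`, where, as in `cutDem`, each edge of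
`H` contributes once in each of its two orientations. -/
noncomputable def demCount (C : K → Finset VH) (σ : K → VH → VH → Equiv.Perm (Fin d))
    (S : Finset (W VH d)) : ℕ :=
  ∑ k, ∑ v ∈ C k, ∑ w ∈ (C k).erase v,
    #{x : Cube d | ¬((.inl (v, x) : W VH d) ∈ S ↔
      (.inl (w, negc (permc (σ k v w) x)) : W VH d) ∈ S)}

theorem demCount_le [Finite VH] (C : K → Finset VH) (hCsize : ∀ k, #(C k) = Δ) {r : ℕ}
    (hCmem : ∀ v, #{k | v ∈ C k} ≤ r) (σ : K → VH → VH → Equiv.Perm (Fin d))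
    (S : Finset (W VH d)) : demCount C σ S ≤ 2 * (Δ - 1) * (r * #S.toLeft) := by
  have := Fintype.ofFinite VH
  calc demCount C σ S
      ≤ ∑ k, ∑ v ∈ C k, ∑ w ∈ (C k).erase v, (#(fiber S.toLeft v) + #(fiber S.toLeft w)) := by
        unfold demCount
        gcongr with k _ v _ w _
        simpa only [mem_fiber, mem_toLeft] using
          card_filter_not_mem_iff_mem_le_add (negc_permc_injective (σ k v w))
            (fiber S.toLeft v) (fiber S.toLeft w)
    _ = 2 * (Δ - 1) * ∑ k, ∑ v ∈ C k, #(fiber S.toLeft v) := by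
        simp only [sum_sum_erase_add, hCsize, smul_eq_mul, mul_sum]
    _ = 2 * (Δ - 1) * ∑ v, #{k | v ∈ C k} * #(fiber S.toLeft v) := by
        simp only [sum_sum_mem_eq_sum_card_nsmul, smul_eq_mul]
    _ ≤ 2 * (Δ - 1) * ∑ v, r * #(fiber S.toLeft v) := by
        gcongr with v _
        exact hCmem v
    _ = 2 * (Δ - 1) * (r * #S.toLeft) := by rw [← mul_sum, sum_card_fiber]

variable [Fintype VH]

theorem cutDem_eq_demCount_div (C : K → Finset VH) (σ : K → VH → VH → Equiv.Perm (Fin d))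
    (S : Finset (W VH d)) :
    cutDem d Δ C σ S =
      demCount C σ S / (2 * (Fintype.card K * ((Δ : ℝ) * (Δ - 1) / 2) * 2 ^ d)) := by
  simp only [cutDem, demCount, card_filter, Nat.cast_sum, sum_div, Nat.cast_ite, ite_div, ite_not,
    Nat.cast_zero, Nat.cast_one, zero_div]

theorem cutDem_compl (C : K → Finset VH) (σ : K → VH → VH → Equiv.Perm (Fin d))
    (S : Finset (W VH d)) : cutDem d Δ C σ Sᶜ = cutDem d Δ C σ S := by
  simp only [cutDem, mem_compl, not_iff_not]

theorem cutDem_le_two_mul_card_toLeft_div (hΔ : 2 ≤ Δ) (C : K → Finset VH)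
    (hCsize : ∀ k, #(C k) = Δ) (hCmem : ∀ v, #{k | v ∈ C k} ≤ Δ)
    (σ : K → VH → VH → Equiv.Perm (Fin d)) (S : Finset (W VH d)) :
    cutDem d Δ C σ S ≤ (2 * #S.toLeft : ℕ) / (Fintype.card K * 2 ^ d) := by
  have hΔ_pred : (0 : ℝ) < Δ - 1 := by
    have : (2 : ℝ) ≤ Δ := mod_cast hΔ
    linarith
  have hcount : (demCount C σ S : ℝ) ≤ 2 * (Δ - 1) * (Δ * #S.toLeft) := by
    have := demCount_le C hCsize hCmem σ S
    rw [← Nat.cast_pred (by lia)]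
    exact_mod_cast this
  calc cutDem d Δ C σ S
      ≤ 2 * (Δ - 1) * (Δ * #S.toLeft) /
          (2 * (Fintype.card K * ((Δ : ℝ) * (Δ - 1) / 2) * 2 ^ d)) := by
        rw [cutDem_eq_demCount_div]
        gcongr
    _ = (2 * #S.toLeft : ℕ) / (Fintype.card K * 2 ^ d) := by
        push_cast
        field_simp

theorem cutDem_le_cutCap_of_toRight_eq_empty_or_univ (hΔ : 2 ≤ Δ)
    (hK : Fintype.card K = Fintype.card VH) (C : K → Finset VH) (hCsize : ∀ k, #(C k) = Δ)
    (hCmem : ∀ v, #{k | v ∈ C k} ≤ Δ) (σ : K → VH → VH → Equiv.Perm (Fin d)) {α : ℝ} (hα : 0 ≤ α)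
    {A : Finset (W VH d)} (hA : A.toRight = ∅ ∨ A.toRight = univ) :
    cutDem d Δ C σ A ≤ cutCap VH d α A := by
  wlog toRight_eq_empty : A.toRight = ∅ generalizing A
  · have toRight_eq_univ : A.toRight = univ := hA.resolve_left toRight_eq_empty
    have compl_toRight : Aᶜ.toRight = ∅ := by rw [toRight_compl, toRight_eq_univ, compl_univ]
    rw [← cutDem_compl, ← cutCap_compl]
    exact this (.inl compl_toRight) compl_toRight
  calc cutDem d Δ C σ A
      ≤ (2 * #A.toLeft : ℕ) / (Fintype.card K * 2 ^ d) :=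
        cutDem_le_two_mul_card_toLeft_div hΔ C hCsize hCmem σ A
    _ = (2 * #A.toLeft : ℕ) / (Fintype.card VH * 2 ^ d) := by rw [hK]
    _ ≤ cutCap VH d α A := two_mul_card_toLeft_div_le_cutCap hα toRight_eq_empty

end Demand

/-- In the gadget `(G,D)`, every inadmissible cut `(A, Ā)` — i.e.,
every cut that does not separate `s` from `t` — satisfies `dem(A,Ā) ≤ cap(A,Ā)`:
the total demand it separates is at most the total capacity it cuts. -/
theorem stmt_16 {VH K : Type*} [Fintype VH] [DecidableEq VH] [Fintype K]
    (d Δ : ℕ) (hd : 0 < d) (hΔ : 2 ≤ Δ) (hn : 0 < Fintype.card VH)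
    (hK : Fintype.card K = Fintype.card VH)
    (C : K → Finset VH) (hCsize : ∀ k, (C k).card = Δ)
    (hCmem : ∀ v : VH, (Finset.univ.filter fun k => v ∈ C k).card = Δ)
    (σ : K → VH → VH → Equiv.Perm (Fin d))
    (hσ : ∀ k v w, σ k w v = (σ k v w)⁻¹)
    (α : ℝ) (hα : 0 < α)
    (A : Finset (W VH d))
    (hinadm : ((Sum.inr false : W VH d) ∈ A ↔ (Sum.inr true : W VH d) ∈ A)) :
    cutDem d Δ C σ A ≤ cutCap VH d α A := by
  have toRight_eq : A.toRight = ∅ ∨ A.toRight = univ := by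
    by_cases hs : (Sum.inr false : W VH d) ∈ A
    · exact .inr (by ext (_ | _) <;> simp [hs, ← hinadm])
    · exact .inl (by ext (_ | _) <;> simp [hs, ← hinadm])
  exact cutDem_le_cutCap_of_toRight_eq_empty_or_univ hΔ hK C hCsize
    (fun v => le_of_eq (by convert hCmem v)) σ hα.le toRight_eq

end Stmt16
end

section
/- Let H be a multigraph that is an edge-disjoint union of cliques, each on exactly Δ ≥ 2 vertices. For every ℓ ≥ 1, every cut of the multigraph H × I_ℓ contains at most a (1/2 + 1/(2(Δ−1))) fraction of its edges. -/
open Finset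

/-!
A colouring of `n` points with `q` colours has at least `n² / q` monochromatic ordered pairs, by
Cauchy–Schwarz applied to the colour classes, hence at most `(1 - 1/q) n²` bichromatic ones. The
blow-up of a clique on `c` vertices has `n = cℓ` vertices, and its `c(c - 1)ℓ²` ordered edges make
up the fraction `(c - 1)/c` of all `n²` pairs. So at most the fraction
`(1 - 1/q) · c/(c - 1) = (1 - 1/q)(1 + 1/(c - 1))` of them is bichromatic, and summing over the
cliques preserves the bound.
-/

section Pairs

variable {α β : Type*} [Fintype β] [DecidableEq β] (s : Finset α) (g : α → β)

lemma card_sq_le_card_mul_monochromatic_pairs :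
    (#s : ℝ) ^ 2 ≤ Fintype.card β * ∑ x ∈ s, ∑ y ∈ s, if g x = g y then (1 : ℝ) else 0 := by
  have card_eq_sum_classes : (#s : ℝ) = ∑ c, (#{x ∈ s | g x = c} : ℝ) := by
    exact_mod_cast card_eq_sum_card_fiberwise (f := g) (t := univ) (by simp)
  have pairs_eq_sum_sq : ∑ x ∈ s, ∑ y ∈ s, (if g x = g y then (1 : ℝ) else 0) =
      ∑ c, (#{x ∈ s | g x = c} : ℝ) ^ 2 := by
    rw [← sum_fiberwise s g]
    refine sum_congr rfl fun c _ => ?_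
    calc ∑ x ∈ s with g x = c, ∑ y ∈ s, (if g x = g y then (1 : ℝ) else 0)
        = ∑ x ∈ s with g x = c, (#{y ∈ s | g y = c} : ℝ) := by
          refine sum_congr rfl fun x hx => ?_
          simp only [(mem_filter.1 hx).2, sum_boole, eq_comm]
      _ = (#{x ∈ s | g x = c} : ℝ) ^ 2 := by rw [sum_const, nsmul_eq_mul, sq]
  rw [pairs_eq_sum_sq, card_eq_sum_classes]
  exact sq_sum_le_card_mul_sum_sq

lemma bichromatic_pairs_le :
    ∑ x ∈ s, ∑ y ∈ s, (if g x ≠ g y then (1 : ℝ) else 0) ≤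
      (1 - 1 / (Fintype.card β : ℝ)) * (#s : ℝ) ^ 2 := by
  have complement : ∑ x ∈ s, ∑ y ∈ s, (if g x ≠ g y then (1 : ℝ) else 0) =
      (#s : ℝ) ^ 2 - ∑ x ∈ s, ∑ y ∈ s, (if g x = g y then (1 : ℝ) else 0) := by
    have indicator_ne (x y : α) : (if g x ≠ g y then (1 : ℝ) else 0) =
        1 - if g x = g y then 1 else 0 := by
      by_cases h : g x = g y <;> simp [h]
    simp only [indicator_ne, sum_sub_distrib, sum_const, nsmul_eq_mul, mul_one, sq]
  have monochromatic : (#s : ℝ) ^ 2 / Fintype.card β ≤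
      ∑ x ∈ s, ∑ y ∈ s, if g x = g y then (1 : ℝ) else 0 :=
    div_le_of_le_mul₀ (by positivity) (by positivity)
      ((card_sq_le_card_mul_monochromatic_pairs s g).trans_eq (mul_comm _ _))
  rw [complement, sub_mul, one_mul, one_div_mul_eq_div]
  exact sub_le_sub_left monochromatic _

end Pairs

section Blowup

variable {V I : Type*} [DecidableEq V] [Fintype I]

lemma clique_blowup_edges_eq (s : Finset V) :
    ∑ v ∈ s, ∑ _w ∈ s.erase v, ∑ _i : I, ∑ _j : I, (1 : ℝ) =
      #s * (#s - 1) * (Fintype.card I : ℝ) ^ 2 := by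
  have degree (v : V) (hv : v ∈ s) : ∑ _w ∈ s.erase v, ∑ _i : I, ∑ _j : I, (1 : ℝ) =
      (#s - 1) * (Fintype.card I : ℝ) ^ 2 := by
    simp only [sum_const, card_univ, nsmul_eq_mul, mul_one, cast_card_erase_of_mem hv, sq]
  rw [sum_congr rfl degree, sum_const, nsmul_eq_mul, mul_assoc]

variable {β : Type*} [Fintype β] [DecidableEq β]

lemma clique_blowup_cut_le_sq (s : Finset V) (g : V × I → β) :
    ∑ v ∈ s, ∑ w ∈ s.erase v, ∑ i, ∑ j, (if g (v, i) ≠ g (w, j) then (1 : ℝ) else 0) ≤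
      (1 - 1 / (Fintype.card β : ℝ)) * (#s * Fintype.card I : ℝ) ^ 2 := by
  calc ∑ v ∈ s, ∑ w ∈ s.erase v, ∑ i, ∑ j, (if g (v, i) ≠ g (w, j) then (1 : ℝ) else 0)
      ≤ ∑ v ∈ s, ∑ w ∈ s, ∑ i, ∑ j, (if g (v, i) ≠ g (w, j) then (1 : ℝ) else 0) :=
        sum_le_sum fun v _ =>
          sum_le_sum_of_subset_of_nonneg (erase_subset v s) fun _ _ _ => by positivity
    _ = ∑ x ∈ s ×ˢ univ, ∑ y ∈ s ×ˢ univ, (if g x ≠ g y then (1 : ℝ) else 0) := by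
        simp only [sum_product]
        exact sum_congr rfl fun v _ => sum_comm
    _ ≤ (1 - 1 / (Fintype.card β : ℝ)) * (#s * Fintype.card I : ℝ) ^ 2 := by
        simpa only [card_product, card_univ, Nat.cast_mul] using bichromatic_pairs_le (s ×ˢ univ) g

lemma clique_blowup_cut_le_mul_edges {Δ : ℕ} (hΔ : 2 ≤ Δ) {s : Finset V} (hs : Δ ≤ #s)
    (g : V × I → β) :
    ∑ v ∈ s, ∑ w ∈ s.erase v, ∑ i, ∑ j, (if g (v, i) ≠ g (w, j) then (1 : ℝ) else 0) ≤
      (1 - 1 / (Fintype.card β : ℝ)) * (1 + 1 / ((Δ : ℝ) - 1)) *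
        ∑ v ∈ s, ∑ _w ∈ s.erase v, ∑ _i : I, ∑ _j : I, (1 : ℝ) := by
  have one_lt_Δ : (1 : ℝ) < Δ := by exact_mod_cast hΔ
  have Δ_le : (Δ : ℝ) ≤ #s := by exact_mod_cast hs
  have colour_factor_nonneg : 0 ≤ 1 - 1 / (Fintype.card β : ℝ) := by
    simpa only [one_div, sub_nonneg] using Nat.cast_inv_le_one (Fintype.card β)
  have card_le : (#s : ℝ) ≤ (1 + 1 / ((Δ : ℝ) - 1)) * (#s - 1) := by
    have : 1 ≤ ((#s : ℝ) - 1) / (Δ - 1) := (one_le_div (by linarith)).2 (by linarith)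
    rw [add_mul, one_mul, one_div_mul_eq_div]
    linarith
  calc _ ≤ (1 - 1 / (Fintype.card β : ℝ)) * (#s * Fintype.card I : ℝ) ^ 2 :=
        clique_blowup_cut_le_sq s g
    _ = (1 - 1 / (Fintype.card β : ℝ)) * (#s * (#s * (Fintype.card I : ℝ) ^ 2)) := by ring
    _ ≤ (1 - 1 / (Fintype.card β : ℝ)) *
          ((1 + 1 / ((Δ : ℝ) - 1)) * (#s - 1) * (#s * (Fintype.card I : ℝ) ^ 2)) := by
        gcongr
    _ = (1 - 1 / (Fintype.card β : ℝ)) * (1 + 1 / ((Δ : ℝ) - 1)) *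
          (#s * (#s - 1) * (Fintype.card I : ℝ) ^ 2) := by ring
    _ = _ := by rw [clique_blowup_edges_eq]

end Blowup

theorem stmt_17_general {V K I β : Type*} [DecidableEq V] [Fintype K] [Fintype I]
    [Fintype β] [DecidableEq β] (Δ : ℕ) (hΔ : 2 ≤ Δ) (C : K → Finset V) (hC : ∀ k, Δ ≤ #(C k))
    (g : V × I → β) :
    ∑ k, ∑ v ∈ C k, ∑ w ∈ (C k).erase v, ∑ i, ∑ j,
        (if g (v, i) ≠ g (w, j) then (1 : ℝ) else 0) ≤
      (1 - 1 / (Fintype.card β : ℝ)) * (1 + 1 / ((Δ : ℝ) - 1)) *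
        ∑ k, ∑ v ∈ C k, ∑ _w ∈ (C k).erase v, ∑ _i : I, ∑ _j : I, (1 : ℝ) := by
  rw [mul_sum]
  exact sum_le_sum fun k _ => clique_blowup_cut_le_mul_edges hΔ (hC k) g

/-- Let `H` be a multigraph that is an edge-disjoint union of cliques
(indexed by `K`), each on exactly `Δ ≥ 2` vertices.  For every `ℓ ≥ 1`, every cut
(two-coloring `g`) of the multigraph `H × I_ℓ` contains at most a
`(1/2 + 1/(2(Δ−1)))` fraction of its edges.  (Edges are counted here as ordered
quadruples `(k, v, w, i, j)`, which counts every edge of `H × I_ℓ` exactly twice, so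
the fractions are unaffected.) -/
theorem stmt_17 {V K : Type*} [Fintype V] [DecidableEq V] [Fintype K]
    (Δ : ℕ) (hΔ : 2 ≤ Δ) (C : K → Finset V) (hC : ∀ k, (C k).card = Δ)
    (ℓ : ℕ) (hℓ : 1 ≤ ℓ) (g : V × Fin ℓ → Bool) :
    (∑ k : K, ∑ v ∈ C k, ∑ w ∈ (C k).erase v, ∑ i : Fin ℓ, ∑ j : Fin ℓ,
        (if g (v, i) ≠ g (w, j) then (1 : ℝ) else 0))
      ≤ (1 / 2 + 1 / (2 * ((Δ : ℝ) - 1))) *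
        (∑ k : K, ∑ v ∈ C k, ∑ w ∈ (C k).erase v, ∑ _i : Fin ℓ, ∑ _j : Fin ℓ, (1 : ℝ)) := by
  convert stmt_17_general Δ hΔ C (fun k => (hC k).ge) g using 2
  rw [Fintype.card_bool, Nat.cast_ofNat, ← div_div]; ring
end
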